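/- arXiv:2306.02989 — 2 statements merged into one kernel-verified Lean document; each statement's English description precedes it below -/
import Mathlib

section
/- (Etingof–Guralnick–Soloviev) Let X be a quandle whose number of elements is a prime p, and assume X is indecomposable. Then there exist α ∈ ℤ/pℤ \ {0,1} and a bijection ψ : ℤ/pℤ → X such that ψ((1−α)i + αj) = ψ(i) ▷ ψ(j) for all i, j ∈ ℤ/pℤ; that is, X is isomorphic to the affine quandle Aff(p,α). -/
/-
Write `L_x` for the translation `y ↦ x ◃ y` of a quandle of prime order `p` whose inner group `G` is
transitive. The translations form one conjugacy class of `G`, of size dividing `p`. Let `g = L_a`,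
and let `s` be an element of order `p` in the normal closure of the commutators `⁅t, g⁆`; it exists
because this closure is a nontrivial normal subgroup of the primitive group `G`. The product `y` of
the class sums of `s` and `g` in the group algebra is fixed by left multiplication by each `⁅t, g⁆`,
as one sees in every irreducible representation `ρ` of `G`. If `p` divides the degree of `ρ`, the
character of `ρ` vanishes at `s`: otherwise it would have a conjugate of absolute value at least `p`
there, whereas the squares of the absolute values of all irreducible characters at `s` add up to the
order of the centralizer of `s`, which is less than `p ^ 2`. If `p` does not divide the degree,
Burnside's argument shows that the character vanishes at `g` or `ρ g` is scalar. Hence `s * y = y`,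
so the coefficients of `y` at `s * g` and at `g` agree, and `g` is the product of a conjugate `σ` of
`s` and a conjugate `L_b` of `g`. From `σ * L_b = L_a`, with `a` and `b` in one orbit of the
`p`-cycle `σ`, it follows that `L_b` normalises `⟨σ⟩`, which makes the quandle affine.
-/

open scoped commutatorElement Quandles

/-! ### Algebraic integers and matrices of finite order -/

lemma eq_of_card_le_norm_sum {ι E : Type*} [Fintype ι] [NormedAddCommGroup E] [NormedSpace ℝ E]
    [StrictConvexSpace ℝ E] {z : ι → E} (hz : ∀ i, ‖z i‖ = 1)
    (hle : (Fintype.card ι : ℝ) ≤ ‖∑ i, z i‖) (j k : ι) : z j = z k := by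
  classical
  by_contra hne
  have hjk : j ≠ k := fun h => hne (congrArg z h)
  have hlt : ‖z j + z k‖ < 2 := by
    have := norm_add_lt_of_not_sameRay fun h : SameRay ℝ (z j) (z k) =>
      hne (h.eq_of_norm_eq ((hz j).trans (hz k).symm))
    linarith [hz j, hz k]
  have hrest : ‖∑ i ∈ ({j, k} : Finset ι)ᶜ, z i‖ ≤ Fintype.card ι - 2 := by
    calc ‖∑ i ∈ ({j, k} : Finset ι)ᶜ, z i‖ ≤ ∑ i ∈ ({j, k} : Finset ι)ᶜ, ‖z i‖ := norm_sum_le _ _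
      _ = Fintype.card ι - 2 := by
        have hcard := Finset.card_add_card_compl {j, k}
        rw [Finset.card_pair hjk] at hcard
        rw [Finset.sum_congr rfl fun i _ => hz i, Finset.sum_const, nsmul_one, ← hcard]
        push_cast
        ring
  have hsum := norm_add_le (z j + z k) (∑ i ∈ ({j, k} : Finset ι)ᶜ, z i)
  rw [← Finset.sum_pair hjk, Finset.sum_add_sum_compl, Finset.sum_pair hjk] at hsum
  linarith

lemma exists_one_le_norm_of_isIntegral {F : Type*} [Field F] [CharZero F]
    [Algebra.IsAlgebraic ℚ F] {x : F} (hx : IsIntegral ℤ x) (hx0 : x ≠ 0) :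
    ∃ σ : F →+* ℂ, 1 ≤ ‖σ x‖ := by
  let K := IntermediateField.adjoin ℚ {x}
  have : FiniteDimensional ℚ K := IntermediateField.adjoin.finiteDimensional hx.tower_top
  have : NumberField K := { to_charZero := inferInstance, to_finiteDimensional := this }
  let y : K := IntermediateField.AdjoinSimple.gen ℚ x
  have hyx : algebraMap K F y = x := IntermediateField.AdjoinSimple.algebraMap_gen ℚ x
  have hy : IsIntegral ℤ y := (isIntegral_algebraMap_iff (algebraMap K F).injective).1 (hyx ▸ hx)
  have hy0 : (⟨y, hy⟩ : NumberField.RingOfIntegers K) ≠ 0 := fun h =>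
    hx0 (by rw [← hyx, show y = 0 from congrArg Subtype.val h, map_zero])
  obtain ⟨τ, hτ⟩ := NumberField.exists_conjugate_one_le_norm hy0
  let _ : Algebra K ℂ := τ.toAlgebra
  have : Algebra.IsAlgebraic K F := Algebra.IsAlgebraic.tower_top (K := ℚ) K
  let σ : F →ₐ[K] ℂ := IsAlgClosed.lift
  exact ⟨σ, by rwa [← hyx, RingHom.coe_coe, AlgHom.commutes]⟩

lemma isIntegral_of_coprime_mul {R : Type*} [CommRing R] {a b : ℕ} (hab : a.Coprime b) {x : R}
    (ha : IsIntegral ℤ (a * x)) (hb : IsIntegral ℤ (b * x)) : IsIntegral ℤ x := by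
  have hbezout : (1 : R) = a * (a.gcdA b : ℤ) + b * (a.gcdB b : ℤ) := by
    exact_mod_cast congrArg (Int.cast : ℤ → R) (hab ▸ Nat.gcd_eq_gcd_ab a b)
  have hx : x = a.gcdA b • (a * x) + a.gcdB b • (b * x) := by
    simp only [zsmul_eq_mul]
    linear_combination x * hbezout
  exact hx ▸ (ha.smul _).add (hb.smul _)

lemma exists_basis_hasEigenvector {F V n : Type*} [Field F] [IsAlgClosed F] [AddCommGroup V]
    [Module F V] [Finite n] (b₀ : Module.Basis n F V) {T : Module.End F V}
    (hT : T.IsSemisimple) :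
    ∃ (b : Module.Basis n F V) (μ : n → F), ∀ j, T.HasEigenvector (μ j) (b j) := by
  classical
  have := Module.Finite.of_basis b₀
  have hint : DirectSum.IsInternal T.eigenspace :=
    (DirectSum.isInternal_submodule_iff_iSupIndep_and_iSup_eq_top _).2
      ⟨T.eigenspaces_iSupIndep, hT.iSup_eigenspace_eq_top⟩
  let c := hint.collectedBasis fun μ => Module.finBasis F (T.eigenspace μ)
  let ε := c.indexEquiv b₀
  refine ⟨c.reindex ε, fun j => (ε.symm j).1, fun j => ⟨?_, (c.reindex ε).ne_zero j⟩⟩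
  rw [c.reindex_apply]
  exact hint.collectedBasis_mem _ (ε.symm j)

section FiniteOrder

open Matrix

variable {F n : Type*} [Field F] [Fintype n] [DecidableEq n]
  {M : Matrix n n F} {N : ℕ}

lemma exists_eq_conj_diagonal_of_pow_eq_one [IsAlgClosed F] (hN : (N : F) ≠ 0) (hM : M ^ N = 1) :
    ∃ (P : (Matrix n n F)ˣ) (μ : n → F), (∀ j, μ j ^ N = 1) ∧
      M = P.val * diagonal μ * P⁻¹.val := by
  have hpow : toLin' M ^ N = 1 := by rw [← toLin'_pow, hM, toLin'_one]; rfl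
  have hss : Module.End.IsSemisimple (toLin' M) :=
    Module.End.isSemisimple_of_squarefree_aeval_eq_zero
      (Polynomial.separable_X_pow_sub_C (1 : F) hN one_ne_zero).squarefree (by simp [hpow])
  obtain ⟨b, μ, hb⟩ := exists_basis_hasEigenvector (Pi.basisFun F n) hss
  let P : (Matrix n n F)ˣ :=
    ⟨(Pi.basisFun F n).toMatrix b, b.toMatrix (Pi.basisFun F n),
      (Pi.basisFun F n).toMatrix_mul_toMatrix_flip b, b.toMatrix_mul_toMatrix_flip _⟩
  have hMP : M * P.val = P.val * diagonal μ := by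
    ext i j
    rw [mul_diagonal, mul_comm]
    exact congrFun (hb j).apply_eq_smul i
  refine ⟨P, μ, fun j => ?_, by rw [← hMP, mul_assoc, P.mul_inv, mul_one]⟩
  have hfix : μ j ^ N • b j = b j := by rw [← (hb j).pow_apply, hpow, Module.End.one_apply]
  exact smul_left_injective F (b.ne_zero j) (hfix.trans (one_smul F _).symm)

lemma isIntegral_trace_of_pow_eq_one [IsAlgClosed F] (hN : (N : F) ≠ 0) (hM : M ^ N = 1) :
    IsIntegral ℤ M.trace := by
  obtain ⟨P, μ, hμ, rfl⟩ := exists_eq_conj_diagonal_of_pow_eq_one hN hM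
  rw [trace_units_conj, trace_diagonal]
  exact IsIntegral.sum _ fun j _ =>
    .of_pow (Nat.pos_of_ne_zero fun h => hN (by simp [h])) (hμ j ▸ isIntegral_one)

lemma map_trace_of_mul_eq_one [IsAlgClosed F] (hN : (N : F) ≠ 0) (hM : M ^ N = 1)
    {B : Matrix n n F} (hBM : B * M = 1) (σ : F →+* ℂ) :
    σ B.trace = starRingEnd ℂ (σ M.trace) := by
  have hN0 : N ≠ 0 := fun h => hN (by simp [h])
  obtain ⟨P, μ, hμ, rfl⟩ := exists_eq_conj_diagonal_of_pow_eq_one hN hM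
  have hμ0 (j : n) : μ j ≠ 0 := fun h => by simpa [h, hN0] using hμ j
  have hB : B = P.val * diagonal μ⁻¹ * P⁻¹.val := by
    refine left_inv_eq_right_inv hBM ?_
    calc P.val * diagonal μ * P⁻¹.val * (P.val * diagonal μ⁻¹ * P⁻¹.val)
        = P.val * (diagonal μ * diagonal μ⁻¹) * P⁻¹.val := by
          simp only [mul_assoc, P.inv_mul_cancel_left]
      _ = 1 := by simp [hμ0]
  have hinv (j : n) : σ (μ j)⁻¹ = starRingEnd ℂ (σ (μ j)) := by
    rw [map_inv₀]
    exact RCLike.inv_eq_conj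
      (Complex.norm_eq_one_of_pow_eq_one (by rw [← map_pow, hμ, map_one]) hN0)
  simp only [hB, trace_units_conj, trace_diagonal, map_sum, Pi.inv_apply, hinv]

lemma mem_range_scalar_of_card_le_norm_trace [IsAlgClosed F] (hN : (N : F) ≠ 0)
    (hM : M ^ N = 1) {σ : F →+* ℂ} (hle : (Fintype.card n : ℝ) ≤ ‖σ M.trace‖) :
    M ∈ Set.range (scalar n) := by
  have hN0 : N ≠ 0 := fun h => hN (by simp [h])
  obtain ⟨P, μ, hμ, rfl⟩ := exists_eq_conj_diagonal_of_pow_eq_one hN hM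
  rw [trace_units_conj, trace_diagonal, map_sum] at hle
  have hnorm (j : n) : ‖σ (μ j)‖ = 1 :=
    Complex.norm_eq_one_of_pow_eq_one (by rw [← map_pow, hμ, map_one]) hN0
  have hconst (j k : n) : μ j = μ k := σ.injective (eq_of_card_le_norm_sum hnorm hle j k)
  obtain hn | ⟨⟨j₀⟩⟩ := isEmpty_or_nonempty n
  · exact ⟨0, Subsingleton.elim _ _⟩
  have hμ₀ : μ = fun _ => μ j₀ := funext fun j => hconst j j₀
  refine ⟨μ j₀, ?_⟩
  rw [hμ₀, ← scalar_apply, ← (scalar_commute (μ j₀) (Commute.all _) P.val).eq, mul_assoc,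
    P.mul_inv, mul_one]

end FiniteOrder

/-! ### Class sums and characters -/

lemma ncard_setOf_isConj {G : Type*} [Group G] (h : G) :
    {x | IsConj h x}.ncard = (Subgroup.centralizer {h}).index := by
  have horbit : MulAction.orbit (ConjAct G) h = {x | IsConj h x} :=
    Set.ext fun x => ConjAct.mem_orbit_conjAct.trans isConj_comm
  rw [← horbit, ← MulAction.index_stabilizer, ConjAct.stabilizer_eq_centralizer]
  rfl

section ClassSum

variable (R : Type*) [Semiring R] {G : Type*} [Group G] [Fintype G]

open Classical in
/-- The sum of the conjugacy class of `h` in the group algebra `R[G]`. -/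
noncomputable def classSum (h : G) : MonoidAlgebra R G :=
  ∑ x with IsConj h x, MonoidAlgebra.of R G x

lemma of_mul_classSum (h t : G) :
    MonoidAlgebra.of R G t * classSum R h = classSum R h * MonoidAlgebra.of R G t := by
  classical
  simp only [classSum, Finset.mul_sum, Finset.sum_mul, ← map_mul]
  refine Finset.sum_equiv (MulAut.conj t).toEquiv (fun x => ?_) fun x _ => by simp
  have hx : IsConj x (t * x * t⁻¹) := isConj_iff.2 ⟨t, rfl⟩
  simp only [Finset.mem_filter, Finset.mem_univ, true_and]
  exact ⟨fun h => h.trans hx, fun h => h.trans hx.symm⟩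

lemma commute_classSum {R : Type*} [CommSemiring R] (h : G) (v : MonoidAlgebra R G) :
    Commute v (classSum R h) := by
  induction v using MonoidAlgebra.induction_on with
  | of t => exact of_mul_classSum R h t
  | add v w hv hw => exact hv.add_left hw
  | smul r v hv => exact hv.smul_left r

lemma coeff_classSum_mul_classSum_ne_zero_iff {R : Type*} [Semiring R] [CharZero R] {s g w : G} :
    (classSum R s * classSum R g).coeff w ≠ 0 ↔ ∃ x y, IsConj s x ∧ IsConj g y ∧ x * y = w := by
  classical
  have hcoeff : (classSum R s * classSum R g).coeff w =
      ((({x | IsConj s x} : Finset G) ×ˢ ({y | IsConj g y} : Finset G)).filter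
        fun z => z.1 * z.2 = w).card := by
    simp only [classSum, Finset.sum_mul_sum, MonoidAlgebra.of_apply,
      MonoidAlgebra.single_mul_single, one_mul, MonoidAlgebra.coeff_sum, Finsupp.finsetSum_apply,
      MonoidAlgebra.coeff_single, Finsupp.single_apply, Finset.card_filter, Nat.cast_sum,
      Nat.cast_ite, Nat.cast_one, Nat.cast_zero, Finset.sum_product]
  rw [hcoeff, Nat.cast_ne_zero, Finset.card_ne_zero, Finset.filter_nonempty_iff]
  simp [and_assoc]

end ClassSum

section Character

open Matrix

variable {F G m : Type*} [Field F] [Group G] [Fintype m] [DecidableEq m]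

/-- The character of the matrix representation `ρ` of `G`, encoded as a homomorphism from the group
algebra; `ρ` is surjective exactly when the representation is absolutely irreducible. -/
noncomputable def matrixCharacter (ρ : MonoidAlgebra F G →ₐ[F] Matrix m m F) (h : G) : F :=
  (ρ (MonoidAlgebra.of F G h)).trace

variable (ρ : MonoidAlgebra F G →ₐ[F] Matrix m m F)

lemma matrixCharacter_eq_of_isConj {h x : G} (hx : IsConj h x) :
    matrixCharacter ρ x = matrixCharacter ρ h := by
  obtain ⟨t, rfl⟩ := isConj_iff.1 hx
  rw [matrixCharacter, map_mul, map_mul, map_mul, map_mul, trace_mul_cycle, ← map_mul, ← map_mul,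
    ← map_mul, ← map_mul, inv_mul_cancel, one_mul, matrixCharacter]

lemma map_of_commutator_eq_one {ρ : MonoidAlgebra F G →ₐ[F] Matrix m m F} {g : G}
    (hg : ρ (MonoidAlgebra.of F G g) ∈ Set.range (scalar m)) (t : G) :
    ρ (MonoidAlgebra.of F G ⁅t, g⁆) = 1 := by
  obtain ⟨c, hc⟩ := hg
  have hcomm := (scalar_commute c (Commute.all c) (ρ (MonoidAlgebra.of F G t))).eq
  rw [hc, ← map_mul, ← map_mul, ← map_mul, ← map_mul] at hcomm
  have hquot : ⁅t, g⁆ = t * g * (g * t)⁻¹ := by group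
  rw [hquot, map_mul, map_mul, ← hcomm, ← map_mul, ← map_mul, mul_inv_cancel, map_one, map_one]

lemma map_of_pow_card (h : G) : ρ (MonoidAlgebra.of F G h) ^ Nat.card G = 1 := by
  rw [← map_pow, ← map_pow, pow_card_eq_one', map_one, map_one]

lemma trace_map_classSum [Fintype G] (h : G) :
    (ρ (classSum F h)).trace = (Subgroup.centralizer {h}).index * matrixCharacter ρ h := by
  classical
  rw [classSum, map_sum, trace_sum, ← ncard_setOf_isConj, Set.ncard_eq_toFinset_card',
    Set.toFinset_ofPred, ← nsmul_eq_mul]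
  exact Finset.sum_eq_card_nsmul fun x hx =>
    matrixCharacter_eq_of_isConj ρ (Finset.mem_filter.1 hx).2

variable {ρ}

lemma exists_map_classSum_eq_algebraMap [Fintype G] (hρ : Function.Surjective ρ) (h : G) :
    ∃ ω, ρ (classSum F h) = algebraMap F (Matrix m m F) ω := by
  have hcomm : ρ (classSum F h) ∈ Set.range (scalar m) := by
    refine mem_range_scalar_iff_commute_single'.2 fun i j => ?_
    obtain ⟨v, hv⟩ := hρ (single i j 1)
    exact hv ▸ (commute_classSum h v).map ρ
  exact hcomm.imp fun ω hω => hω.symm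

lemma map_classSum_eq_zero [Fintype G] [CharZero F] (hρ : Function.Surjective ρ) {h : G}
    (hχ : matrixCharacter ρ h = 0) : ρ (classSum F h) = 0 := by
  obtain ⟨ω, hω⟩ := exists_map_classSum_eq_algebraMap hρ h
  have htrace := trace_map_classSum ρ h
  rw [hχ, mul_zero, hω, algebraMap_eq_diagonal, trace_diagonal] at htrace
  obtain hm | hω0 : Fintype.card m = 0 ∨ ω = 0 := by simpa using htrace
  · have := Fintype.card_eq_zero_iff.1 hm
    exact Subsingleton.elim _ _
  · rw [hω, hω0, map_zero]

variable [Finite G] [CharZero F]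

lemma isIntegral_index_mul_matrixCharacter_div_card (hρ : Function.Surjective ρ) (h : G) :
    IsIntegral ℤ ((Subgroup.centralizer {h}).index * matrixCharacter ρ h / Fintype.card m) := by
  obtain hm | hm := isEmpty_or_nonempty m
  · simp [isIntegral_zero]
  cases nonempty_fintype G
  obtain ⟨ω, hω⟩ := exists_map_classSum_eq_algebraMap hρ h
  have : (Subgroup.centralizer {h}).index * matrixCharacter ρ h / Fintype.card m = ω := by
    rw [← trace_map_classSum, hω, algebraMap_eq_diagonal, trace_diagonal]
    simp [mul_comm]
  rw [this, ← isIntegral_algebraMap_iff (FaithfulSMul.algebraMap_injective F (Matrix m m F)), ← hω]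
  let φ : MonoidAlgebra ℤ G →ₐ[ℤ] Matrix m m F :=
    MonoidAlgebra.lift ℤ _ G ((ρ : MonoidAlgebra F G →* Matrix m m F).comp (MonoidAlgebra.of F G))
  have hφ : φ (classSum ℤ h) = ρ (classSum F h) := by
    simp [φ, classSum]
  rw [← hφ]
  exact (IsIntegral.of_finite ℤ (classSum ℤ h)).map φ

variable [IsAlgClosed F]

lemma isIntegral_matrixCharacter (h : G) : IsIntegral ℤ (matrixCharacter ρ h) :=
  isIntegral_trace_of_pow_eq_one (Nat.cast_ne_zero.2 (Finite.card_pos (α := G)).ne')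
    (map_of_pow_card ρ h)

lemma map_matrixCharacter_inv (σ : F →+* ℂ) (h : G) :
    σ (matrixCharacter ρ h⁻¹) = starRingEnd ℂ (σ (matrixCharacter ρ h)) :=
  map_trace_of_mul_eq_one (Nat.cast_ne_zero.2 (Finite.card_pos (α := G)).ne')
    (map_of_pow_card ρ h) (by rw [← map_mul, ← map_mul, inv_mul_cancel, map_one, map_one]) σ

lemma map_of_mem_range_scalar_of_coprime [Algebra.IsAlgebraic ℚ F] (hρ : Function.Surjective ρ)
    {g : G} (hcop : (Subgroup.centralizer {g}).index.Coprime (Fintype.card m))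
    (hχ : matrixCharacter ρ g ≠ 0) : ρ (MonoidAlgebra.of F G g) ∈ Set.range (scalar m) := by
  obtain hm | hm := isEmpty_or_nonempty m
  · exact ⟨0, Subsingleton.elim _ _⟩
  have hm0 : (Fintype.card m : F) ≠ 0 := Nat.cast_ne_zero.2 Fintype.card_ne_zero
  have hint : IsIntegral ℤ (matrixCharacter ρ g / Fintype.card m) := by
    refine isIntegral_of_coprime_mul hcop ?_ ?_
    · rw [← mul_div_assoc]
      exact isIntegral_index_mul_matrixCharacter_div_card hρ g
    · rw [mul_div_cancel₀ _ hm0]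
      exact isIntegral_matrixCharacter g
  obtain ⟨σ, hσ⟩ := exists_one_le_norm_of_isIntegral hint (div_ne_zero hχ hm0)
  rw [map_div₀, map_natCast, norm_div, Complex.norm_natCast,
    one_le_div (Nat.cast_pos.2 Fintype.card_pos)] at hσ
  exact mem_range_scalar_of_card_le_norm_trace (Nat.cast_ne_zero.2 (Finite.card_pos (α := G)).ne')
    (map_of_pow_card ρ g) hσ

end Character

/-! ### Column orthogonality -/

open Matrix in
lemma trace_mulLeftRight_pi_matrix {F ι : Type*} [CommRing F] [Fintype ι] {m : ι → Type*}
    [∀ i, Fintype (m i)] (A B : ∀ i, Matrix (m i) (m i) F) :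
    LinearMap.trace F _ (LinearMap.mulLeftRight F (A, B)) = ∑ i, (A i).trace * (B i).trace := by
  classical
  let b := Pi.basis fun i => Matrix.stdBasis F (m i) (m i)
  have hentry (i : ι) (j k : m i) :
      b.repr (A * b ⟨i, j, k⟩ * B) ⟨i, j, k⟩ = A i j j * B i k k := by
    have hrepr (v : ∀ i, Matrix (m i) (m i) F) : b.repr v ⟨i, j, k⟩ = v i j k := rfl
    have hb : b ⟨i, j, k⟩ i = single j k 1 := by simp [b, Matrix.stdBasis_eq_single]
    rw [hrepr, Pi.mul_apply, Pi.mul_apply, hb, mul_apply, Finset.sum_eq_single k,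
      mul_single_apply_same, mul_one]
    · exact fun l _ hl => by rw [mul_single_apply_of_ne _ _ _ _ _ hl, zero_mul]
    · exact fun hk => (hk (Finset.mem_univ k)).elim
  simp only [LinearMap.trace_eq_matrix_trace F b, trace, diag, LinearMap.toMatrix_apply,
    LinearMap.mulLeftRight_apply, Fintype.sum_sigma, Fintype.sum_prod_type, hentry,
    Finset.sum_mul_sum]

lemma trace_mulLeftRight_of_inv {F G : Type*} [CommRing F] [Group G] [Finite G] (h : G) :
    LinearMap.trace F _
        (LinearMap.mulLeftRight F (MonoidAlgebra.of F G h, MonoidAlgebra.of F G h⁻¹)) =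
      Nat.card (Subgroup.centralizer {h}) := by
  classical
  cases nonempty_fintype G
  let b : Module.Basis G F (MonoidAlgebra F G) := MonoidAlgebra.basis G F
  have hentry (x : G) :
      b.repr (MonoidAlgebra.of F G h * b x * MonoidAlgebra.of F G h⁻¹) x =
        if x ∈ Subgroup.centralizer {h} then 1 else 0 := by
    have hb : b x = MonoidAlgebra.of F G x := rfl
    have hrepr (v : MonoidAlgebra F G) : b.repr v x = v.coeff x := rfl
    rw [hb, hrepr, ← map_mul, ← map_mul, MonoidAlgebra.of_apply, MonoidAlgebra.coeff_single,
      Finsupp.single_apply]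
    refine if_congr ?_ rfl rfl
    rw [Subgroup.mem_centralizer_singleton_iff, mul_inv_eq_iff_eq_mul, eq_comm]
  simp only [LinearMap.trace_eq_matrix_trace F b, Matrix.trace, Matrix.diag,
    LinearMap.toMatrix_apply, LinearMap.mulLeftRight_apply, hentry, Finset.sum_boole,
    ← Fintype.card_subtype, Nat.card_eq_fintype_card]

section Blocks

variable {F G ι : Type*} [Field F] [Group G] {m : ι → Type*} [∀ i, Fintype (m i)]
  [∀ i, DecidableEq (m i)] (e : MonoidAlgebra F G ≃ₐ[F] ∀ i, Matrix (m i) (m i) F)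

/-- The `i`-th irreducible matrix representation of `G` read off a Wedderburn decomposition `e` of
its group algebra. -/
noncomputable def blockRepresentation (i : ι) : MonoidAlgebra F G →ₐ[F] Matrix (m i) (m i) F :=
  (Pi.evalAlgHom F _ i).comp e.toAlgHom

lemma blockRepresentation_surjective (i : ι) : Function.Surjective (blockRepresentation e i) :=
  (Function.surjective_eval i).comp e.surjective

lemma ext_blockRepresentation {v w : MonoidAlgebra F G}
    (h : ∀ i, blockRepresentation e i v = blockRepresentation e i w) : v = w :=
  e.injective (funext h)

variable [Finite G]

lemma sum_matrixCharacter_mul_inv [Fintype ι] (h : G) :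
    ∑ i, matrixCharacter (blockRepresentation e i) h *
      matrixCharacter (blockRepresentation e i) h⁻¹ = Nat.card (Subgroup.centralizer {h}) := by
  have hconj : e.toLinearEquiv.conj
      (LinearMap.mulLeftRight F (MonoidAlgebra.of F G h, MonoidAlgebra.of F G h⁻¹)) =
      LinearMap.mulLeftRight F (e (MonoidAlgebra.of F G h), e (MonoidAlgebra.of F G h⁻¹)) :=
    LinearMap.ext fun v => by simp
  rw [← trace_mulLeftRight_of_inv, ← LinearMap.trace_conj' _ e.toLinearEquiv, hconj,
    trace_mulLeftRight_pi_matrix]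
  rfl

variable [CharZero F] [IsAlgClosed F]

lemma sum_norm_sq_map_matrixCharacter [Fintype ι] (σ : F →+* ℂ) (h : G) :
    ∑ i, ‖σ (matrixCharacter (blockRepresentation e i) h)‖ ^ 2 =
      Nat.card (Subgroup.centralizer {h}) := by
  have hterm (i : ι) : ((‖σ (matrixCharacter (blockRepresentation e i) h)‖ ^ 2 : ℝ) : ℂ) =
      σ (matrixCharacter (blockRepresentation e i) h *
        matrixCharacter (blockRepresentation e i) h⁻¹) := by
    rw [map_mul, map_matrixCharacter_inv, Complex.mul_conj']
    push_cast
    rfl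
  have hsum := congrArg σ (sum_matrixCharacter_mul_inv e h)
  rw [map_sum, map_natCast, ← Finset.sum_congr rfl fun i _ => hterm i] at hsum
  exact_mod_cast hsum

lemma matrixCharacter_eq_zero_of_dvd_card [Finite ι] [Algebra.IsAlgebraic ℚ F] {s : G} {d : ℕ}
    (hcop : (Subgroup.centralizer {s}).index.Coprime d)
    (hlt : Nat.card (Subgroup.centralizer {s}) < d ^ 2) {i : ι} (hd : d ∣ Fintype.card (m i)) :
    matrixCharacter (blockRepresentation e i) s = 0 := by
  cases nonempty_fintype ι
  by_contra hχ
  have hd0 : d ≠ 0 := by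
    rintro rfl
    simp at hlt
  have : Nonempty (m i) := not_isEmpty_iff.1 fun _ => hχ (Matrix.trace_eq_zero_of_isEmpty _)
  have hint : IsIntegral ℤ (matrixCharacter (blockRepresentation e i) s / d) := by
    refine isIntegral_of_coprime_mul hcop ?_ ?_
    · have hω :=
        isIntegral_index_mul_matrixCharacter_div_card (blockRepresentation_surjective e i) s
      obtain ⟨k, hk⟩ := hd
      have hk0 : k ≠ 0 := fun h => Fintype.card_ne_zero (hk.trans (by rw [h, mul_zero]))
      rw [hk, Nat.cast_mul] at hω
      convert hω.mul (isIntegral_natCast (a := k)) using 1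
      field_simp
    · rw [mul_div_cancel₀ _ (Nat.cast_ne_zero.2 hd0)]
      exact isIntegral_matrixCharacter s
  obtain ⟨σ, hσ⟩ := exists_one_le_norm_of_isIntegral hint
    (div_ne_zero hχ (Nat.cast_ne_zero.2 hd0))
  rw [map_div₀, map_natCast, norm_div, Complex.norm_natCast,
    one_le_div (Nat.cast_pos.2 (Nat.pos_of_ne_zero hd0))] at hσ
  have hle : (d : ℝ) ^ 2 ≤ Nat.card (Subgroup.centralizer {s}) := by
    rw [← sum_norm_sq_map_matrixCharacter e σ s]
    exact (pow_le_pow_left₀ d.cast_nonneg hσ 2).trans <|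
      Finset.single_le_sum (f := fun j => ‖σ (matrixCharacter (blockRepresentation e j) s)‖ ^ 2)
        (fun j _ => sq_nonneg _) (Finset.mem_univ i)
  exact hlt.not_ge (by exact_mod_cast hle)

end Blocks

/-! ### Products of conjugacy classes -/

lemma of_mul_eq_self_of_mem_normalClosure {R G : Type*} [Semiring R] [Group G]
    {y : MonoidAlgebra R G} (hy : ∀ t, Commute (MonoidAlgebra.of R G t) y) {S : Set G}
    (hS : ∀ c ∈ S, MonoidAlgebra.of R G c * y = y) {n : G} (hn : n ∈ Subgroup.normalClosure S) :
    MonoidAlgebra.of R G n * y = y := by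
  induction hn using Subgroup.closure_induction with
  | mem n hn =>
    obtain ⟨c, hc, hcn⟩ := Group.mem_conjugatesOfSet_iff.1 hn
    obtain ⟨t, rfl⟩ := isConj_iff.1 hcn
    rw [map_mul, mul_assoc, (hy t⁻¹).eq, map_mul, mul_assoc, ← mul_assoc _ y, hS c hc,
      ← (hy t⁻¹).eq, ← mul_assoc, ← map_mul, mul_inv_cancel, map_one, one_mul]
  | one => rw [map_one, one_mul]
  | mul a b _ _ ha hb => rw [map_mul, mul_assoc, hb, ha]
  | inv a _ ha => nth_rw 1 [← ha, ← mul_assoc, ← map_mul, inv_mul_cancel, map_one, one_mul]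

theorem exists_isConj_mul_isConj_eq {G : Type*} [Group G] [Finite G] {p : ℕ} (hp : p.Prime)
    {g s : G} (hg : (Subgroup.centralizer {g}).index ∣ p)
    (hs : (Subgroup.centralizer {s}).index.Coprime p)
    (hlt : Nat.card (Subgroup.centralizer {s}) < p ^ 2)
    (hmem : s ∈ Subgroup.normalClosure (Set.range fun t : G => ⁅t, g⁆)) :
    ∃ x y, IsConj s x ∧ IsConj g y ∧ x * y = g := by
  cases nonempty_fintype G
  let F := AlgebraicClosure ℚ
  have : Algebra.IsAlgebraic ℚ F := by
    rw [Subsingleton.elim DivisionRing.toRatAlgebra (AlgebraicClosure.instAlgebra ℚ)]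
    infer_instance
  obtain ⟨n, m, _, ⟨e⟩⟩ :=
    IsSemisimpleRing.exists_algEquiv_pi_matrix_of_isAlgClosed F (MonoidAlgebra F G)
  let y := classSum F s * classSum F g
  have hcomm (i : Fin n) (t : G) : blockRepresentation e i (MonoidAlgebra.of F G ⁅t, g⁆ * y) =
      blockRepresentation e i y := by
    have hρ := blockRepresentation_surjective e i
    rw [map_mul]
    obtain hdvd | hcop := (Nat.coprime_or_dvd_of_prime hp (Fintype.card (Fin (m i)))).symm
    · rw [map_mul _ (classSum F s), map_classSum_eq_zero hρ
        (matrixCharacter_eq_zero_of_dvd_card e hs hlt hdvd), zero_mul, mul_zero]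
    by_cases hχ : matrixCharacter (blockRepresentation e i) g = 0
    · rw [map_mul _ (classSum F s), map_classSum_eq_zero hρ hχ, mul_zero, mul_zero]
    · rw [map_of_commutator_eq_one (map_of_mem_range_scalar_of_coprime hρ
        (hcop.coprime_dvd_left hg) hχ), one_mul]
  have hy : MonoidAlgebra.of F G s * y = y := of_mul_eq_self_of_mem_normalClosure
    (fun t => (commute_classSum s _).mul_right (commute_classSum g _))
    (Set.forall_mem_range.2 fun t => ext_blockRepresentation e fun i => hcomm i t) hmem
  have hsg : y.coeff (s * g) ≠ 0 :=
    coeff_classSum_mul_classSum_ne_zero_iff.2 ⟨s, g, .refl s, .refl g, rfl⟩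
  rw [← hy, MonoidAlgebra.of_apply, MonoidAlgebra.coeff_single_mul_apply, one_mul,
    inv_mul_cancel_left] at hsg
  exact coeff_classSum_mul_classSum_ne_zero_iff.1 hsg

/-! ### Permutation groups of prime degree -/

section PrimeDegree

variable {G Q : Type*} [Group G] [MulAction G Q]

lemma exists_orderOf_eq_of_isPretransitive [Finite G] (hQ : (Nat.card Q).Prime) (N : Subgroup G)
    [MulAction.IsPretransitive N Q] : ∃ s ∈ N, orderOf s = Nat.card Q := by
  have := Fact.mk hQ
  have : Nonempty Q := (Nat.card_pos_iff.1 hQ.pos).1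
  have hdvd : Nat.card Q ∣ Nat.card N := by
    rw [← MulAction.index_stabilizer_of_transitive N (Classical.arbitrary Q)]
    exact Subgroup.index_dvd_card _
  obtain ⟨s, hs⟩ := exists_prime_orderOf_dvd_card' _ hdvd
  exact ⟨s, s.2, (Subgroup.orderOf_coe s).trans hs⟩

variable [FaithfulSMul G Q]

lemma isPretransitive_zpowers_of_orderOf_eq {s : G} (hQ : (Nat.card Q).Prime)
    (hs : orderOf s = Nat.card Q) : MulAction.IsPretransitive (Subgroup.zpowers s) Q := by
  classical
  have : Finite Q := Nat.finite_of_card_ne_zero hQ.ne_zero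
  cases nonempty_fintype Q
  let σ := MulAction.toPermHom G Q s
  have hσ : orderOf σ = Nat.card Q :=
    (orderOf_injective (MulAction.toPermHom G Q) MulAction.toPerm_injective s).trans hs
  have hcycle : σ.IsCycle := by
    refine Equiv.Perm.isCycle_of_prime_order' (hσ ▸ hQ) ?_
    rw [hσ, Nat.card_eq_fintype_card, two_mul]
    exact Nat.lt_add_of_pos_right (Nat.card_eq_fintype_card (α := Q) ▸ hQ.pos)
  have hsupp : σ.support = Finset.univ := by
    rw [← Finset.card_eq_iff_eq_univ, ← hcycle.orderOf, hσ, Nat.card_eq_fintype_card]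
  have hmove (x : Q) : σ x ≠ x := Equiv.Perm.mem_support.1 (hsupp ▸ Finset.mem_univ x)
  refine ⟨fun x y => ?_⟩
  obtain ⟨k, hk⟩ := hcycle.exists_zpow_eq (hmove x) (hmove y)
  exact ⟨⟨s ^ k, k, rfl⟩, by rwa [← map_zpow] at hk⟩

lemma card_centralizer_le_of_isPretransitive_zpowers [Finite Q] [Nonempty Q] (s : G)
    [MulAction.IsPretransitive (Subgroup.zpowers s) Q] :
    Nat.card (Subgroup.centralizer {s}) ≤ Nat.card Q := by
  let a := Classical.arbitrary Q
  refine Nat.card_le_card_of_injective (fun c : Subgroup.centralizer {s} => c • a) fun c d hcd => ?_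
  refine Subtype.ext (eq_of_smul_eq_smul (α := Q) fun b => ?_)
  obtain ⟨⟨_, k, rfl⟩, rfl⟩ := MulAction.exists_smul_eq (Subgroup.zpowers s) a b
  have hcomm (c : Subgroup.centralizer {s}) : (c : G) • s ^ k • a = s ^ k • c • a := by
    have hc : Commute (c : G) s := Subgroup.mem_centralizer_singleton_iff.1 c.2
    rw [smul_smul, (hc.zpow_right k).eq, mul_smul]
    rfl
  exact (hcomm c).trans ((congrArg _ hcd).trans (hcomm d).symm)

lemma index_centralizer_coprime_of_orderOf_eq {s : G} (hQ : (Nat.card Q).Prime)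
    (hs : orderOf s = Nat.card Q) : (Subgroup.centralizer {s}).index.Coprime (Nat.card Q) := by
  have : Finite Q := Nat.finite_of_card_ne_zero hQ.ne_zero
  have hle : Subgroup.zpowers s ≤ Subgroup.centralizer {s} :=
    Subgroup.zpowers_le.2 (Subgroup.mem_centralizer_singleton_iff.2 rfl)
  have hdvd : (Subgroup.zpowers s).index * Nat.card Q ∣ (Nat.card Q).factorial := by
    rw [← hs, ← Nat.card_zpowers, Subgroup.index_mul_card, Nat.card_zpowers, hs, ← Nat.card_perm]
    exact Subgroup.card_dvd_of_injective (MulAction.toPermHom G Q) MulAction.toPerm_injective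
  rw [← Nat.mul_factorial_pred hQ.ne_zero, mul_comm] at hdvd
  have hfact := Nat.dvd_of_mul_dvd_mul_left hQ.pos hdvd
  refine Nat.Coprime.coprime_dvd_left ((Subgroup.index_dvd_of_le hle).trans hfact) ?_
  exact (hQ.coprime_factorial_of_lt (Nat.pred_lt hQ.ne_zero)).symm

lemma isPretransitive_of_normal_of_ne_bot [MulAction.IsPretransitive G Q] (hQ : (Nat.card Q).Prime)
    {N : Subgroup G} [N.Normal] (hN : N ≠ ⊥) : MulAction.IsPretransitive N Q := by
  have := MulAction.IsPreprimitive.of_prime_card (G := G) hQ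
  refine MulAction.IsQuasiPreprimitive.isPretransitive_of_normal (G := G) fun hfix => hN ?_
  refine (Subgroup.eq_bot_iff_forall N).2 fun n hn => eq_of_smul_eq_smul (α := Q) fun x => ?_
  rw [one_smul]
  exact MulAction.mem_fixedPoints.1 (hfix ▸ Set.mem_univ x) ⟨n, hn⟩

theorem exists_orderOf_eq_and_mul_isConj_eq [MulAction.IsPretransitive G Q]
    (hQ : (Nat.card Q).Prime) {g : G} {a : Q}
    (hstab : MulAction.stabilizer G a ≤ Subgroup.centralizer {g}) (hg : g ∉ Subgroup.center G) :
    ∃ s x, orderOf s = Nat.card Q ∧ IsConj g x ∧ s * x = g := by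
  have : Finite Q := Nat.finite_of_card_ne_zero hQ.ne_zero
  have : Finite G := Finite.of_injective (MulAction.toPermHom G Q) MulAction.toPerm_injective
  have : Nonempty Q := ⟨a⟩
  let N := Subgroup.normalClosure (Set.range fun t : G => ⁅t, g⁆)
  have hN : N ≠ ⊥ := fun h => hg <| Subgroup.mem_center_iff.2 fun t =>
    commutatorElement_eq_one_iff_mul_comm.1 <| Subgroup.mem_bot.1 <|
      h ▸ Subgroup.subset_normalClosure ⟨t, rfl⟩
  have := isPretransitive_of_normal_of_ne_bot hQ hN
  obtain ⟨s, hsN, hs⟩ := exists_orderOf_eq_of_isPretransitive hQ N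
  have := isPretransitive_zpowers_of_orderOf_eq hQ hs
  have hlt : Nat.card (Subgroup.centralizer {s}) < Nat.card Q ^ 2 :=
    (card_centralizer_le_of_isPretransitive_zpowers s).trans_lt
      (lt_self_pow₀ hQ.one_lt one_lt_two)
  have hindex : (Subgroup.centralizer {g}).index ∣ Nat.card Q :=
    MulAction.index_stabilizer_of_transitive G a ▸ Subgroup.index_dvd_of_le hstab
  obtain ⟨_, x, hsx, hgx, hmul⟩ := exists_isConj_mul_isConj_eq hQ hindex
    (index_centralizer_coprime_of_orderOf_eq hQ hs) hlt hsN
  obtain ⟨c, rfl⟩ := isConj_iff.1 hsx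
  exact ⟨_, x, ((MulAut.conj c).orderOf_eq s).trans hs, hgx, hmul⟩

end PrimeDegree

/-! ### Quandles of prime order -/

lemma exists_conj_eq_zpow_of_mul_eq_conj_zpow {G : Type*} [Group G] {σ g : G} {j : ℤ}
    (hσ : (orderOf σ).Prime) (h : σ * g = σ ^ j * g * (σ ^ j)⁻¹) :
    ∃ k : ℤ, g * σ * g⁻¹ = σ ^ k := by
  have hconj : g * σ ^ j * g⁻¹ = σ ^ (j - 1) := by
    rw [eq_mul_inv_iff_mul_eq] at h
    rw [mul_inv_eq_iff_eq_mul, ← mul_right_inj σ, ← mul_assoc, h, ← mul_assoc, ← zpow_one_add]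
    simp
  have hj : σ ^ j ≠ 1 := by
    intro hj
    rw [hj, one_mul, inv_one, mul_one, mul_eq_right] at h
    exact hσ.ne_one (orderOf_eq_one_iff.2 h)
  have hcoprime : j.gcd (orderOf σ) = 1 := by
    refine (hσ.coprime_iff_not_dvd.2 fun hdvd => hj ?_).symm
    exact orderOf_dvd_iff_zpow_eq_one.1 (Int.natCast_dvd.2 hdvd)
  obtain ⟨m, hm : (σ ^ j) ^ m = σ⟩ := mem_zpowers_zpow_iff.2 hcoprime
  refine ⟨(j - 1) * m, ?_⟩
  calc g * σ * g⁻¹ = (g * σ ^ j * g⁻¹) ^ m := by rw [conj_zpow, hm]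
    _ = σ ^ ((j - 1) * m) := by rw [hconj, zpow_mul]

section Quandle

/-- The inner group of a rack: the group of bijections generated by the maps `y ↦ x ◃ y`. -/
def innerGroup (R : Type*) [Rack R] : Subgroup (Equiv.Perm R) :=
  Subgroup.closure {e | ∃ x, e = Rack.act' x}

/-- The bijection `y ↦ x ◃ y` as an element of the inner group. -/
def innerTranslation {R : Type*} [Rack R] (x : R) : innerGroup R :=
  ⟨Rack.act' x, Subgroup.subset_closure ⟨x, rfl⟩⟩

lemma innerTranslation_smul {R : Type*} [Rack R] (c : innerGroup R) (x : R) :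
    innerTranslation (c • x) = c * innerTranslation x * c⁻¹ := by
  suffices h : ∀ c ∈ innerGroup R, ∀ x, Rack.act' (c x) = c * Rack.act' x * c⁻¹ from
    Subtype.ext (h c c.2 x)
  intro c hc
  induction hc using Subgroup.closure_induction with
  | mem e he =>
    obtain ⟨z, rfl⟩ := he
    exact Rack.ad_conj z
  | one => simp
  | mul a b _ _ ha hb =>
    intro x
    rw [Equiv.Perm.mul_apply, ha, hb]
    group
  | inv a _ ha =>
    intro x
    have hx := ha (a⁻¹ x)
    rw [show a (a⁻¹ x) = x from a.apply_symm_apply x] at hx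
    rw [hx]
    group

lemma stabilizer_le_centralizer_innerTranslation {R : Type*} [Rack R] (a : R) :
    MulAction.stabilizer (innerGroup R) a ≤ Subgroup.centralizer {innerTranslation a} := by
  intro c hc
  have hconj := innerTranslation_smul c a
  rw [MulAction.mem_stabilizer_iff.1 hc] at hconj
  exact Subgroup.mem_centralizer_singleton_iff.2 (eq_mul_inv_iff_mul_eq.1 hconj).symm

lemma ne_zero_of_act_eq_affine {R A : Type*} [Rack R] [Nontrivial R] [Ring A] {α : A} {ψ : A → R}
    (hψ : Function.Surjective ψ) (hact : ∀ i j, ψ ((1 - α) * i + α * j) = ψ i ◃ ψ j) : α ≠ 0 := by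
  rintro rfl
  obtain ⟨x, y, hxy⟩ := exists_pair_ne R
  obtain ⟨i, rfl⟩ := hψ x
  obtain ⟨j, rfl⟩ := hψ y
  refine hxy ((Rack.left_cancel (ψ i)).1 ?_)
  rw [← hact, ← hact, zero_mul, zero_mul]

variable {Q : Type*} [Quandle Q]

lemma zpow_smul_act_zpow_smul {τ : innerGroup Q} {b : Q} {k : ℤ}
    (hk : innerTranslation b * τ * (innerTranslation b)⁻¹ = τ ^ k) (m n : ℤ) :
    (τ ^ m • b) ◃ (τ ^ n • b) = τ ^ (m + k * (n - m)) • b := by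
  have hfix : (innerTranslation b)⁻¹ • b = b := inv_smul_eq_iff.2 (Quandle.fix (x := b)).symm
  calc (τ ^ m • b) ◃ (τ ^ n • b) = innerTranslation (τ ^ m • b) • τ ^ n • b := rfl
    _ = τ ^ m • (innerTranslation b * τ ^ (n - m) * (innerTranslation b)⁻¹) • b := by
      rw [innerTranslation_smul, mul_smul _ _ b, hfix, smul_smul, smul_smul, ← zpow_neg, mul_assoc,
        mul_assoc, ← zpow_add, neg_add_eq_sub]
    _ = τ ^ (m + k * (n - m)) • b := by
      rw [← conj_zpow, hk, ← zpow_mul, smul_smul, ← zpow_add]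

lemma exists_bijective_affine [Finite Q] {τ : innerGroup Q} (hτ : orderOf τ = Nat.card Q)
    [MulAction.IsPretransitive (Subgroup.zpowers τ) Q] {b : Q} {k : ℤ}
    (hk : innerTranslation b * τ * (innerTranslation b)⁻¹ = τ ^ k) :
    ∃ (α : ZMod (Nat.card Q)) (ψ : ZMod (Nat.card Q) → Q), Function.Bijective ψ ∧
      ∀ i j, ψ ((1 - α) * i + α * j) = ψ i ◃ ψ j := by
  have : NeZero (Nat.card Q) := ⟨(Nat.card_pos_iff.2 ⟨⟨b⟩, inferInstance⟩).ne'⟩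
  let ψ (i : ZMod (Nat.card Q)) : Q := τ ^ (i.cast : ℤ) • b
  have hψ (m : ℤ) : ψ m = τ ^ m • b := by
    refine congrArg (· • b) (zpow_eq_zpow_iff_modEq.2 ?_)
    rw [hτ, ← ZMod.intCast_eq_intCast_iff, ZMod.intCast_zmod_cast]
  have hsurj : Function.Surjective ψ := fun x => by
    obtain ⟨⟨_, m, rfl⟩, hm⟩ := MulAction.exists_smul_eq (Subgroup.zpowers τ) b x
    exact ⟨m, (hψ m).trans hm⟩
  refine ⟨k, ψ, (Nat.bijective_iff_surjective_and_card ψ).2 ⟨hsurj, Nat.card_zmod _⟩, fun i j => ?_⟩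
  obtain ⟨m, rfl⟩ := ZMod.intCast_surjective i
  obtain ⟨n, rfl⟩ := ZMod.intCast_surjective j
  rw [hψ, hψ, zpow_smul_act_zpow_smul hk, ← hψ]
  push_cast
  ring_nf

variable [MulAction.IsPretransitive (innerGroup Q) Q]

lemma exists_act_ne [Nontrivial Q] : ∃ x y : Q, x ◃ y ≠ y := by
  by_contra! htriv
  have hbot : innerGroup Q = ⊥ := by
    refine Subgroup.closure_eq_bot_iff.2 ?_
    rintro _ ⟨x, rfl⟩
    exact Equiv.ext (htriv x)
  obtain ⟨x, y, hxy⟩ := exists_pair_ne Q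
  obtain ⟨c, rfl⟩ := MulAction.exists_smul_eq (innerGroup Q) x y
  have hc : (c : Equiv.Perm Q) = 1 := Subgroup.mem_bot.1 (hbot ▸ c.2)
  exact hxy (congrArg (fun e : Equiv.Perm Q => e x) hc).symm

lemma ne_one_of_act_eq_affine [Nontrivial Q] {A : Type*} [Ring A] {α : A} {ψ : A → Q}
    (hψ : Function.Surjective ψ) (hact : ∀ i j, ψ ((1 - α) * i + α * j) = ψ i ◃ ψ j) : α ≠ 1 := by
  rintro rfl
  obtain ⟨x, y, hxy⟩ := exists_act_ne (Q := Q)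
  obtain ⟨i, rfl⟩ := hψ x
  obtain ⟨j, rfl⟩ := hψ y
  exact hxy (by rw [← hact, sub_self, zero_mul, zero_add, one_mul])

lemma innerTranslation_notMem_center [Nontrivial Q] (a : Q) :
    innerTranslation a ∉ Subgroup.center (innerGroup Q) := by
  intro hcentral
  have hconst (x : Q) : innerTranslation x = innerTranslation a := by
    obtain ⟨c, rfl⟩ := MulAction.exists_smul_eq (innerGroup Q) a x
    rw [innerTranslation_smul, Subgroup.mem_center_iff.1 hcentral c, mul_inv_cancel_right]
  obtain ⟨x, y, hxy⟩ := exists_act_ne (Q := Q)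
  have hact : innerTranslation x • y = innerTranslation y • y := by rw [hconst x, hconst y]
  exact hxy (hact.trans Quandle.fix)

lemma exists_orderOf_eq_and_conj_eq_zpow (hQ : (Nat.card Q).Prime) :
    ∃ (σ : innerGroup Q) (b : Q) (k : ℤ), orderOf σ = Nat.card Q ∧
      innerTranslation b * σ * (innerTranslation b)⁻¹ = σ ^ k := by
  have : Finite Q := Nat.finite_of_card_ne_zero hQ.ne_zero
  have : Nontrivial Q := Finite.one_lt_card_iff_nontrivial.1 hQ.one_lt
  let a := Classical.arbitrary Q
  obtain ⟨σ, _, hσ, hconj, hmul⟩ := exists_orderOf_eq_and_mul_isConj_eq hQ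
    (stabilizer_le_centralizer_innerTranslation a) (innerTranslation_notMem_center a)
  have := isPretransitive_zpowers_of_orderOf_eq hQ hσ
  obtain ⟨c, rfl⟩ := isConj_iff.1 hconj
  rw [← innerTranslation_smul] at hmul
  obtain ⟨⟨_, j, rfl⟩, hj : σ ^ j • c • a = a⟩ :=
    MulAction.exists_smul_eq (Subgroup.zpowers σ) (c • a) a
  have hcomm : σ * innerTranslation (c • a) = σ ^ j * innerTranslation (c • a) * (σ ^ j)⁻¹ := by
    rw [hmul, ← innerTranslation_smul, hj]
  obtain ⟨k, hk⟩ := exists_conj_eq_zpow_of_mul_eq_conj_zpow (hσ ▸ hQ) hcomm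
  exact ⟨σ, c • a, k, hσ, hk⟩

end Quandle

/-- Etingof–Guralnick–Soloviev: Let `Q` be a quandle whose number of elements is a
prime `p`, and assume `Q` is indecomposable (the group of bijections of `Q` generated by the maps
`y ↦ x ◃ y` acts transitively on `Q`). Then there exist `α ∈ ℤ/pℤ \ {0,1}` and a bijection
`ψ : ℤ/pℤ → Q` such that `ψ((1−α)i + αj) = ψ(i) ◃ ψ(j)` for all `i, j`; that is, `Q` is
isomorphic to the affine quandle `Aff(p, α)`. -/
theorem stmt7 (Q : Type*) [Quandle Q] [Fintype Q] (p : ℕ) (hp : p.Prime)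
    (hcard : Fintype.card Q = p)
    (hindec : ∀ a b : Q,
      ∃ g ∈ Subgroup.closure {e : Equiv.Perm Q | ∃ x : Q, e = Rack.act' x}, g a = b) :
    ∃ α : ZMod p, α ≠ 0 ∧ α ≠ 1 ∧
      ∃ ψ : ZMod p → Q, Function.Bijective ψ ∧
        ∀ i j : ZMod p, ψ ((1 - α) * i + α * j) = Shelf.act (ψ i) (ψ j) := by
  rw [← Nat.card_eq_fintype_card] at hcard
  subst hcard
  have : Nontrivial Q := Finite.one_lt_card_iff_nontrivial.1 hp.one_lt
  have : MulAction.IsPretransitive (innerGroup Q) Q := ⟨fun a b =>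
    let ⟨g, hg, hgab⟩ := hindec a b
    ⟨⟨g, hg⟩, hgab⟩⟩
  obtain ⟨σ, b, k, hσ, hk⟩ := exists_orderOf_eq_and_conj_eq_zpow hp
  have := isPretransitive_zpowers_of_orderOf_eq hp hσ
  obtain ⟨α, ψ, hψ, hact⟩ := exists_bijective_affine hσ hk
  exact ⟨α, ne_zero_of_act_eq_affine hψ.surjective hact, ne_one_of_act_eq_affine hψ.surjective hact,
    ψ, hψ, hact⟩
end

section
/- Let k be a field, G a group, p a prime, and V a Yetter–Drinfeld module over kG with dim_k V = p. Let X = { x ∈ G : V_x ≠ 0 } be the support of V, and assume: X is a conjugacy class of G; X generates G; and for each x ∈ X, V_x is a nonzero irreducible module over the centralizer C_G(x) all of whose C_G(x)-equivariant endomorphisms are scalar multiples of the identity (i.e., V is absolutely irreducible). Then: (i) there exist α ∈ ℤ/pℤ \ {0,1} and a bijection φ : ℤ/pℤ → X with φ(i)φ(j)φ(i)⁻¹ = φ((1−α)i + αj) for all i, j ∈ ℤ/pℤ; (ii) dim_k V_x = 1 for all x ∈ X; and (iii) there exist a scalar λ ∈ k^× and a family of nonzero vectors v_x ∈ V_x (x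 ∈ X) such that x · v_y = λ v_{x y x⁻¹} for all x, y ∈ X. -/
/-!
Conjugation makes `G` a transitive permutation group of prime degree on its class `X`. By
Burnside's theorem (proved with Müller's argument on power sums) it is either doubly transitive or
contained in an affine group, and in both cases `a * b⁻¹ * c ∈ X` for all `a, b, c ∈ X`: in the
first by counting, in the second because a generator of the translations commutes with its
conjugates. Thus `X` is a coset of a normal subgroup `N`, which has order `p`, and conjugating a
point of `X` by `N` reaches every point of `X` exactly once. Conjugation by `x ∈ X` on `N ≅ ℤ/pℤ`
is multiplication by some `α`, which gives the affine structure, and the vectors `v_y` are the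
transports along `N` of one vector of `V_x`, on which `x` acts by a scalar by Schur's lemma.
-/

/-! ### Power sums and affine permutations -/

section PowerSums

open Polynomial Finset

theorem exists_sum_pow_ne_zero {R : Type*} [CommRing R] [IsDomain R] {U : Finset R}
    (hU : U.Nonempty) (hU0 : 0 ∉ U) : ∃ m, 0 < m ∧ m ≤ #U ∧ ∑ u ∈ U, u ^ m ≠ 0 := by
  by_contra! hzero
  let f : Fin #U → R := fun i ↦ U.equivFin.symm i
  have hf : Function.Injective f := Subtype.val_injective.comp U.equivFin.symm.injective
  have hf_zero : f = 0 := by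
    refine Matrix.eq_zero_of_forall_pow_sum_mul_pow_eq_zero hf fun i ↦ ?_
    rw [← hzero (i + 1) (Nat.succ_pos _) i.2, ← sum_coe_sort U]
    exact (U.equivFin.symm.sum_comp fun u : U ↦ (u : R) * (u : R) ^ (i : ℕ)).trans
      (sum_congr rfl fun u _ ↦ (pow_succ' _ _).symm)
  have i : Fin #U := ⟨0, hU.card_pos⟩
  have hi : f i ∈ U := (U.equivFin.symm i).2
  exact hU0 (by rwa [congrFun hf_zero i] at hi)

theorem exists_sum_pow_ne_zero_of_two_mul_lt {F : Type*} [Field F] [Fintype F] {U : Finset F}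
    (hU : U.Nonempty) (hU0 : 0 ∉ U) {d : F} (hd0 : d ≠ 0) (hdU : d ∉ U) :
    ∃ m, 0 < m ∧ 2 * m < Fintype.card F ∧ ∑ u ∈ U, u ^ m ≠ 0 := by
  classical
  let W : Finset F := (insert 0 U)ᶜ
  have hcard : #W + #U + 1 = Fintype.card F := by
    rw [add_assoc, ← card_insert_of_notMem hU0, card_compl_add_card]
  obtain hle | hlt := le_or_gt #U #W
  · obtain ⟨m, hm, hmU, hsum⟩ := exists_sum_pow_ne_zero hU hU0
    exact ⟨m, hm, by lia, hsum⟩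
  · obtain ⟨m, hm, hmW, hsum⟩ := exists_sum_pow_ne_zero (U := W) ⟨d, by simp [W, hd0, hdU]⟩
      (by simp [W])
    have htotal : ∑ u ∈ U, u ^ m + ∑ u ∈ W, u ^ m = 0 := by
      rw [← FiniteField.sum_pow_lt_card_sub_one F m (by lia),
        ← sum_add_sum_compl (insert 0 U), sum_insert hU0, zero_pow hm.ne', zero_add]
    exact ⟨m, hm, by lia, fun h ↦ hsum (by rwa [h, zero_add] at htotal)⟩

theorem exists_least_sum_pow_ne_zero {F : Type*} [Field F] [Fintype F] {U : Finset F}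
    (hU : U.Nonempty) (hU0 : 0 ∉ U) {d : F} (hd0 : d ≠ 0) (hdU : d ∉ U) :
    ∃ m, 0 < m ∧ 2 * m < Fintype.card F ∧ ∑ u ∈ U, u ^ m ≠ 0 ∧
      ∀ j, 0 < j → j < m → ∑ u ∈ U, u ^ j = 0 := by
  classical
  have hex := exists_sum_pow_ne_zero_of_two_mul_lt hU hU0 hd0 hdU
  obtain ⟨hm, hmF, hUm⟩ := Nat.find_spec hex
  refine ⟨Nat.find hex, hm, hmF, hUm, fun j hj hjm ↦ ?_⟩
  by_contra hne
  exact Nat.find_min hex hjm ⟨hj, by lia, hne⟩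

variable {R : Type*} [CommRing R] {U : Finset R} {m : ℕ}

theorem sum_eval_eq_of_sum_pow_eq_zero (hU : ∀ j, 0 < j → j < m → ∑ u ∈ U, u ^ j = 0)
    (hm : 0 < m) {H : R[X]} (hH : H.natDegree ≤ m) :
    ∑ u ∈ U, H.eval u = #U * H.coeff 0 + H.coeff m * ∑ u ∈ U, u ^ m := by
  obtain ⟨m, rfl⟩ := Nat.exists_eq_add_one.2 hm
  have hmid : ∑ j ∈ range m, H.coeff (j + 1) * ∑ u ∈ U, u ^ (j + 1) = 0 :=
    sum_eq_zero fun j hj ↦ by rw [hU (j + 1) j.succ_pos (by simpa using hj), mul_zero]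
  simp only [eval_eq_sum_range' (Nat.lt_succ_of_le hH)]
  rw [sum_comm]
  simp only [← mul_sum]
  rw [sum_range_succ, sum_range_succ', hmid]
  simp [mul_comm]

theorem sum_add_pow_eq_of_sum_pow_eq_zero (hU : ∀ j, 0 < j → j < m → ∑ u ∈ U, u ^ j = 0)
    {k : ℕ} (hk : 0 < k) (hkm : k ≤ m) (y : R) :
    ∑ u ∈ U, (y + u) ^ k = #U * y ^ k + ∑ u ∈ U, u ^ k := by
  have hdeg : ((X + C y) ^ k).natDegree ≤ k := by compute_degree
  simpa [coeff_X_add_C_pow, add_comm y] using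
    sum_eval_eq_of_sum_pow_eq_zero (fun j hj hjk ↦ hU j hj (hjk.trans_le hkm)) hk hdeg

theorem coeff_sum_taylor_of_sum_pow_eq_zero (hU : ∀ j, 0 < j → j < m → ∑ u ∈ U, u ^ j = 0)
    (hm : 0 < m) {Q : R[X]} (hQ : m ≤ Q.natDegree) :
    (∑ u ∈ U, taylor u Q).coeff (Q.natDegree - m) = #U * Q.coeff (Q.natDegree - m) +
      Q.natDegree.choose m * Q.leadingCoeff * ∑ u ∈ U, u ^ m := by
  have hdeg : (hasseDeriv (Q.natDegree - m) Q).natDegree ≤ m :=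
    (natDegree_hasseDeriv_le Q _).trans (by lia)
  simp only [finsetSum_coeff, taylor_coeff]
  rw [sum_eval_eq_of_sum_pow_eq_zero hU hm hdeg]
  simp [hasseDeriv_coeff, Nat.add_sub_cancel' hQ, Nat.choose_symm hQ]

end PowerSums

section Mueller

open Polynomial Finset

variable {p : ℕ} [Fact p.Prime] {U : Finset (ZMod p)} {m k : ℕ} {P : (ZMod p)[X]}

theorem natCast_choose_ne_zero_of_lt {n : ℕ} (hmn : m ≤ n) (hnp : n < p) :
    (n.choose m : ZMod p) ≠ 0 := by
  rw [Ne, ZMod.natCast_eq_zero_iff]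
  exact fun h ↦ hnp.not_ge <| (Fact.out : p.Prime).dvd_factorial.1 <|
    h.trans ⟨_, by rw [← mul_assoc, Nat.choose_mul_factorial_mul_factorial hmn]⟩

theorem sum_taylor_pow_eq_of_sum_eval_add_pow_eq
    (hU : ∀ j, 0 < j → j < k → ∑ u ∈ U, u ^ j = 0) (hk : 0 < k) (hkp : k * P.natDegree < p)
    (hP : ∀ x, ∑ u ∈ U, P.eval (x + u) ^ k = ∑ u ∈ U, (P.eval x + u) ^ k) :
    ∑ u ∈ U, taylor u (P ^ k) = C (#U : ZMod p) * P ^ k + C (∑ u ∈ U, u ^ k) := by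
  refine eq_of_natDegree_lt_card_of_eval_eq _ _ Function.injective_id (fun x ↦ ?_) ?_
  · simp only [id, eval_finsetSum, taylor_eval, eval_pow, eval_add, eval_mul, eval_C, hP x,
      sum_add_pow_eq_of_sum_pow_eq_zero hU hk le_rfl]
  · have hdeg : (P ^ k).natDegree = k * P.natDegree := natDegree_pow P k
    have hleft : (∑ u ∈ U, taylor u (P ^ k)).natDegree ≤ k * P.natDegree :=
      natDegree_sum_le_of_forall_le _ _ fun u _ ↦ by rw [natDegree_taylor, hdeg]
    have hright : (C (#U : ZMod p) * P ^ k + C (∑ u ∈ U, u ^ k)).natDegree ≤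
        k * P.natDegree := by
      rw [natDegree_add_C]
      exact (natDegree_C_mul_le _ _).trans hdeg.le
    rw [ZMod.card]
    lia

/- The coefficient of `X ^ (deg (P ^ k) - m)` in `∑ u ∈ U, P ^ k (X + u)` is the one of `#U * P ^ k`
plus a nonzero multiple of the `m`-th power sum, which the right-hand side of
`sum_taylor_pow_eq_of_sum_eval_add_pow_eq` can only match in its constant term. -/
theorem natDegree_eq_one_of_sum_eval_add_pow_eq
    (hU : ∀ j, 0 < j → j < m → ∑ u ∈ U, u ^ j = 0) (hUm : ∑ u ∈ U, u ^ m ≠ 0)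
    (hk : 0 < k) (hkm : k ≤ m) (hmk : m ≤ k * P.natDegree) (hkp : k * P.natDegree < p)
    (hP : ∀ x, ∑ u ∈ U, P.eval (x + u) ^ k = ∑ u ∈ U, (P.eval x + u) ^ k) :
    P.natDegree = 1 := by
  have hm : 0 < m := hk.trans_le hkm
  have hdeg : (P ^ k).natDegree = k * P.natDegree := natDegree_pow P k
  have hlead : (P ^ k).leadingCoeff ≠ 0 := by
    have hP0 : P ≠ 0 := by rintro rfl; simp at hmk; lia
    exact leadingCoeff_ne_zero.2 (pow_ne_zero k hP0)
  have hchoose : ((P ^ k).natDegree.choose m : ZMod p) ≠ 0 :=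
    natCast_choose_ne_zero_of_lt (hmk.trans hdeg.ge) (hdeg.trans_lt hkp)
  have hconst : (C (∑ u ∈ U, u ^ k)).coeff ((P ^ k).natDegree - m) ≠ 0 := by
    have hcoeff := congrArg (coeff · ((P ^ k).natDegree - m)) <|
      sum_taylor_pow_eq_of_sum_eval_add_pow_eq (fun j hj hjk ↦ hU j hj (hjk.trans_le hkm)) hk hkp hP
    rw [coeff_sum_taylor_of_sum_pow_eq_zero hU hm (hmk.trans hdeg.ge), coeff_add, coeff_C_mul,
      add_right_inj] at hcoeff
    rw [← hcoeff]
    exact mul_ne_zero (mul_ne_zero hchoose hlead) hUm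
  have hN : k * P.natDegree - m = 0 := by
    by_contra hN
    exact hconst (by rw [hdeg, coeff_C_of_ne_zero hN])
  have hkm' : k = m := by
    by_contra hne
    exact hconst (by rw [hU k hk (lt_of_le_of_ne hkm hne), C_0, coeff_zero])
  exact Nat.eq_of_mul_eq_mul_left hk (by lia)

theorem natDegree_eq_one_of_forall_sum_eval_add_pow_eq (hU : U.Nonempty) (hU0 : 0 ∉ U)
    {d : ZMod p} (hd0 : d ≠ 0) (hdU : d ∉ U) (hP0 : 0 < P.natDegree) (hPp : P.natDegree < p)
    (hP : ∀ k x, ∑ u ∈ U, P.eval (x + u) ^ k = ∑ u ∈ U, (P.eval x + u) ^ k) :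
    P.natDegree = 1 := by
  obtain ⟨m, hm, hmp, hUm, hmin⟩ : ∃ m, 0 < m ∧ 2 * m < p ∧ ∑ u ∈ U, u ^ m ≠ 0 ∧
      ∀ j, 0 < j → j < m → ∑ u ∈ U, u ^ j = 0 := by
    simpa only [ZMod.card] using exists_least_sum_pow_ne_zero hU hU0 hd0 hdU
  obtain hmn | hmn := lt_or_ge (m * P.natDegree) p
  · exact natDegree_eq_one_of_sum_eval_add_pow_eq hmin hUm hm le_rfl
      (Nat.le_mul_of_pos_right m hP0) hmn (hP m)
  · let k := (p - 1) / P.natDegree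
    have hk : 0 < k := Nat.div_pos (by lia) hP0
    have hkp : k * P.natDegree ≤ p - 1 := Nat.div_mul_le_self _ _
    have hpk : p - 1 < (k + 1) * P.natDegree :=
      (Nat.div_lt_iff_lt_mul hP0).1 (Nat.lt_succ_self k)
    have hkm : k < m := lt_of_mul_lt_mul_right (by lia) P.natDegree.zero_le
    have hmk : m ≤ k * P.natDegree := by
      have hle : P.natDegree ≤ k * P.natDegree := Nat.le_mul_of_pos_left _ hk
      rw [add_one_mul] at hpk
      lia
    exact natDegree_eq_one_of_sum_eval_add_pow_eq hmin hUm hk hkm.le hmk (by lia) (hP k)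

theorem exists_natDegree_lt_card_forall_eval_eq {F : Type*} [Field F] [Fintype F] (f : F → F) :
    ∃ P : F[X], P.natDegree < Fintype.card F ∧ ∀ x, P.eval x = f x := by
  classical
  refine ⟨Lagrange.interpolate univ id f, ?_, fun x ↦
    Lagrange.eval_interpolate_at_node f Function.injective_id.injOn (mem_univ x)⟩
  have hdeg := Lagrange.degree_interpolate_le f (s := univ) Function.injective_id.injOn
  exact (natDegree_le_of_degree_le hdeg).trans_lt (Nat.sub_lt Fintype.card_pos one_pos)

theorem exists_affine_of_sub_mem (hU : U.Nonempty) (hU0 : 0 ∉ U) {d : ZMod p} (hd0 : d ≠ 0)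
    (hdU : d ∉ U) {π : ZMod p → ZMod p} (hπ : Function.Injective π)
    (hπU : ∀ i j, i - j ∈ U → π i - π j ∈ U) : ∃ a b, ∀ i, π i = a * i + b := by
  obtain ⟨P, hPp, hPπ⟩ := exists_natDegree_lt_card_forall_eval_eq π
  rw [ZMod.card] at hPp
  have hsum (k : ℕ) (x : ZMod p) :
      ∑ u ∈ U, P.eval (x + u) ^ k = ∑ u ∈ U, (P.eval x + u) ^ k := by
    have hmaps : Set.MapsTo (fun u ↦ π (x + u) - π x) U U := fun u hu ↦ hπU _ _ (by simpa using hu)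
    have hinj : Set.InjOn (fun u ↦ π (x + u) - π x) U := fun u _ v _ h ↦ by
      simpa using hπ (sub_left_injective h)
    refine sum_nbij (fun u ↦ π (x + u) - π x) hmaps hinj
      (surjOn_of_injOn_of_card_le _ hmaps hinj le_rfl) fun u _ ↦ ?_
    rw [hPπ, hPπ, add_sub_cancel]
  have hP0 : 0 < P.natDegree := by
    by_contra! hconst
    obtain ⟨c, rfl⟩ := natDegree_eq_zero.1 (Nat.le_zero.1 hconst)
    exact zero_ne_one (hπ ((hPπ 0).symm.trans (by simp [← hPπ])))
  have hlin := natDegree_eq_one_of_forall_sum_eval_add_pow_eq hU hU0 hd0 hdU hP0 hPp hsum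
  obtain ⟨a, b, rfl⟩ := exists_eq_X_add_C_of_natDegree_le_one hlin.le
  exact ⟨a, b, fun i ↦ by simp [← hPπ]⟩

end Mueller

/-! ### Burnside's theorem on transitive groups of prime degree -/

section Burnside

open Finset MulAction Subgroup

variable {G α : Type*} [Group G] [MulAction G α]

theorem exists_isPretransitive_zpowers [IsPretransitive G α] (hα : (Nat.card α).Prime) :
    ∃ τ : G, IsPretransitive (zpowers τ) α := by
  classical
  have : Fact (Nat.card α).Prime := ⟨hα⟩
  have : Finite α := Nat.finite_of_card_ne_zero hα.ne_zero
  have : Fintype α := Fintype.ofFinite α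
  have hdvd : Nat.card α ∣ Nat.card (toPermHom G α).range := by
    have : IsPretransitive (toPermHom G α).range α := ⟨fun x y ↦
      (exists_smul_eq G x y).elim fun g hg ↦ ⟨⟨toPermHom G α g, g, rfl⟩, hg⟩⟩
    obtain ⟨x⟩ : Nonempty α := Finite.card_pos_iff.1 hα.pos
    rw [← index_stabilizer_of_transitive (toPermHom G α).range x]
    exact index_dvd_card _
  obtain ⟨⟨σ, hσ⟩, hτ⟩ := exists_prime_orderOf_dvd_card' (Nat.card α) hdvd
  rw [Subgroup.orderOf_mk, Nat.card_eq_fintype_card] at hτ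
  obtain ⟨τ, rfl⟩ := hσ
  rw [Nat.card_eq_fintype_card] at hα
  have hcycle := Equiv.Perm.isCycle_of_prime_order'' hα hτ
  have hsupport := (card_eq_iff_eq_univ _).1 (hcycle.orderOf.symm.trans hτ)
  have hmoves (x : α) : toPermHom G α τ x ≠ x :=
    Equiv.Perm.mem_support.1 (hsupport ▸ mem_univ x)
  refine ⟨τ, ⟨fun x y ↦ ?_⟩⟩
  obtain ⟨i, hi⟩ := hcycle.exists_zpow_eq (hmoves x) (hmoves y)
  exact ⟨⟨τ ^ i, zpow_mem_zpowers τ i⟩, by rwa [← map_zpow] at hi⟩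

theorem exists_zmod_equiv_zpow_smul [Nonempty α] (τ : G) [IsPretransitive (zpowers τ) α] :
    ∃ e : ZMod (Nat.card α) ≃ α, ∀ (n : ℤ) (i : ZMod (Nat.card α)), τ ^ n • e i = e (n + i) := by
  obtain ⟨x⟩ := ‹Nonempty α›
  have hcard : Nat.card α = Function.minimalPeriod (τ • ·) x := by
    rw [← Nat.card_zmod (Function.minimalPeriod (τ • ·) x),
      ← Nat.card_congr (orbitZPowersEquiv τ x), orbit_eq_univ, Nat.card_coe_set_eq, Set.ncard_univ]
  rw [hcard]
  let e := (orbitZPowersEquiv τ x).symm.trans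
    ((Equiv.setCongr (orbit_eq_univ (zpowers τ) x)).trans (Equiv.Set.univ α))
  have he (i : ℤ) : e i = τ ^ i • x := congrArg Subtype.val (orbitZPowersEquiv_symm_apply' τ x i)
  refine ⟨e, fun n i ↦ ?_⟩
  obtain ⟨i, rfl⟩ := ZMod.intCast_surjective i
  rw [← Int.cast_add, he, he, zpow_add, mul_smul]

theorem exists_forall_smul_eq_affine {p : ℕ} [Fact p.Prime] {τ : G} (e : ZMod p ≃ α)
    (he : ∀ (n : ℤ) i, τ ^ n • e i = e (n + i)) (h : ¬ IsMultiplyPretransitive G α 2) (g : G) :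
    ∃ a b, ∀ i, g • e i = e (a * i + b) := by
  classical
  simp only [is_two_pretransitive_iff, not_forall, not_exists, not_and] at h
  obtain ⟨x, y, z, w, hxy, hzw, hxyzw⟩ := h
  let U : Finset (ZMod p) := {u | ∃ f : G, e.symm (f • y) - e.symm (f • x) = u}
  have hU : U.Nonempty := ⟨e.symm y - e.symm x, by simpa [U] using ⟨(1 : G), by simp⟩⟩
  have hU0 : 0 ∉ U := by simpa [U, sub_eq_zero] using hxy.symm
  have hU_shift {i j : ZMod p} (hij : i - j ∈ U) : ∃ f : G, f • x = e j ∧ f • y = e i := by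
    obtain ⟨f, hf⟩ := (mem_filter.1 hij).2
    obtain ⟨n, hn⟩ := ZMod.intCast_surjective (j - e.symm (f • x))
    have hshift (t : α) : (τ ^ n * f) • t = e (n + e.symm (f • t)) := by
      rw [← he, e.apply_symm_apply, mul_smul]
    exact ⟨τ ^ n * f, by rw [hshift, hn, sub_add_cancel],
      by rw [hshift, hn, sub_add_eq_add_sub, add_sub_assoc, hf, add_sub_cancel]⟩
  have hUd : e.symm w - e.symm z ∉ U := fun hd ↦
    (hU_shift hd).elim fun f hf ↦ hxyzw f (by simpa using hf.1) (by simpa using hf.2)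
  have hπ : Function.Injective fun i ↦ e.symm (g • e i) :=
    e.symm.injective.comp ((MulAction.injective g).comp e.injective)
  obtain ⟨a, b, hab⟩ := exists_affine_of_sub_mem hU hU0
    (sub_ne_zero.2 (e.symm.injective.ne hzw.symm)) hUd hπ fun i j hij ↦ by
      obtain ⟨f, hfx, hfy⟩ := hU_shift hij
      exact mem_filter.2 ⟨mem_univ _, g * f, by rw [mul_smul, mul_smul, hfx, hfy]⟩
  exact ⟨a, b, fun i ↦ by rw [← hab, e.apply_symm_apply]⟩

theorem isMultiplyPretransitive_two_or_exists_conj_smul_eq_zpow_smul [IsPretransitive G α]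
    (hα : (Nat.card α).Prime) :
    IsMultiplyPretransitive G α 2 ∨
      ∃ τ : G, IsPretransitive (zpowers τ) α ∧
        ∀ g : G, ∃ n : ℤ, ∀ x : α, (g * τ * g⁻¹) • x = τ ^ n • x := by
  refine or_iff_not_imp_left.2 fun htwo ↦ ?_
  have : Fact (Nat.card α).Prime := ⟨hα⟩
  obtain ⟨τ, hτ⟩ := exists_isPretransitive_zpowers (G := G) hα
  have : Nonempty α := (Nat.card_pos_iff.1 hα.pos).1
  obtain ⟨e, he⟩ := exists_zmod_equiv_zpow_smul (α := α) τ
  refine ⟨τ, hτ, fun g ↦ ?_⟩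
  obtain ⟨a, b, hab⟩ := exists_forall_smul_eq_affine e he htwo g
  obtain ⟨n, rfl⟩ := ZMod.intCast_surjective a
  refine ⟨n, fun x ↦ ?_⟩
  obtain ⟨i, hi⟩ := e.surjective (g⁻¹ • x)
  calc (g * τ * g⁻¹) • x = g • τ ^ (1 : ℤ) • e i := by rw [hi, zpow_one, mul_smul, mul_smul]
    _ = e (n + (n * i + b)) := by
      rw [he, hab, Int.cast_one, mul_add, mul_one, add_assoc]
    _ = τ ^ n • x := by rw [← he, ← hab, hi, smul_inv_smul]

end Burnside

/-! ### Conjugacy classes of prime size -/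

open Finset in
theorem injective_or_forall_eq_of_ncard_fiber_eq {α β : Type*} (hα : (Nat.card α).Prime)
    (f : α → β) (hf : ∀ x y, (f ⁻¹' {f x}).ncard = (f ⁻¹' {f y}).ncard) :
    Function.Injective f ∨ ∀ x y, f x = f y := by
  classical
  have : Finite α := Nat.finite_of_card_ne_zero hα.ne_zero
  have : Fintype α := Fintype.ofFinite α
  obtain ⟨x⟩ : Nonempty α := (Nat.card_pos_iff.1 hα.pos).1
  have hcard : Nat.card α = #(univ.image f) * (f ⁻¹' {f x}).ncard := by
    rw [Nat.card_eq_fintype_card, ← card_univ, card_eq_sum_card_image f, ← smul_eq_mul]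
    refine sum_eq_card_nsmul fun b hb ↦ ?_
    obtain ⟨y, -, rfl⟩ := mem_image.1 hb
    rw [hf x y, ← Set.ncard_coe_finset]
    exact congrArg Set.ncard (by ext; simp)
  obtain hone | hall := (Nat.dvd_prime hα).1 (Dvd.intro_left _ hcard.symm)
  · rw [hone, mul_one, Nat.card_eq_fintype_card, ← card_univ] at hcard
    exact .inl (by simpa using card_image_iff.1 hcard.symm)
  · have hconst (y : α) : f y = f x :=
      Set.eq_univ_iff_forall.1 ((Set.eq_univ_iff_ncard _).2 hall) y
    exact .inr fun y z ↦ (hconst y).trans (hconst z).symm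

section ConjugacyClass

open MulAction Subgroup

variable {G : Type*} [Group G] {x y : G}

theorem conj_mem_conjugatesOf (g : G) (hy : y ∈ conjugatesOf x) :
    g * y * g⁻¹ ∈ conjugatesOf x :=
  IsConj.trans hy (isConj_iff.2 ⟨g, rfl⟩)

theorem mem_center_of_closure_eq_top {X : Set G} (hX : closure X = ⊤) {g : G}
    (hg : ∀ y ∈ X, Commute y g) : g ∈ center G := by
  rwa [← centralizer_univ, ← coe_top, ← hX, centralizer_closure]

theorem exists_not_commute_of_mem_conjugatesOf (hgen : closure (conjugatesOf x) = ⊤)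
    (hX : (conjugatesOf x).Nontrivial) (hy : y ∈ conjugatesOf x) :
    ∃ z ∈ conjugatesOf x, ¬ Commute z y := by
  by_contra! hcomm
  have hcenter : y ∈ center G := mem_center_of_closure_eq_top hgen hcomm
  obtain ⟨z, hz, hzy⟩ := hX.exists_ne y
  exact hzy (IsConj.eq_of_left_mem_center (hy.symm.trans hz) hcenter).symm

theorem commute_of_card_conjugatesOf_eq_one (hgen : closure (conjugatesOf x) = ⊤)
    (hX : Nat.card (conjugatesOf x) = 1) (g h : G) : Commute g h := by
  obtain ⟨y, hy⟩ := Set.ncard_eq_one.1 hX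
  rw [hy, ← zpowers_eq_closure] at hgen
  obtain ⟨m, rfl⟩ : g ∈ zpowers y := hgen ▸ mem_top g
  obtain ⟨n, rfl⟩ : h ∈ zpowers y := hgen ▸ mem_top h
  exact Commute.zpow_zpow_self y m n

section TwoTransitive

/-- The conjugation action of `G` on the set `X` is doubly transitive: any ordered pair of distinct
elements of `X` is carried to any other one by a single conjugation. -/
def IsConjTwoTransitive (X : Set G) : Prop :=
  ∀ ⦃a⦄, a ∈ X → ∀ ⦃b⦄, b ∈ X → ∀ ⦃c⦄, c ∈ X → ∀ ⦃d⦄, d ∈ X → a ≠ b → c ≠ d →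
    ∃ g, g * a * g⁻¹ = c ∧ g * b * g⁻¹ = d

/-- The set `X` is a latin quandle under conjugation: for every `y ∈ X` the map `a ↦ a * y * a⁻¹`
permutes `X`. -/
def IsLatinUnderConj (X : Set G) : Prop :=
  ∀ y ∈ X, Set.BijOn (fun a ↦ a * y * a⁻¹) X X

theorem IsConjTwoTransitive.isLatinUnderConj (htwo : IsConjTwoTransitive (conjugatesOf x))
    (hgen : closure (conjugatesOf x) = ⊤) (hX : (conjugatesOf x).Nontrivial)
    (hfin : (conjugatesOf x).Finite) : IsLatinUnderConj (conjugatesOf x) := by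
  intro y hy
  refine (hfin.surjOn_iff_bijOn_of_mapsTo fun a _ ↦ conj_mem_conjugatesOf a hy).1 fun z hz ↦ ?_
  obtain rfl | hzy := eq_or_ne z y
  · exact ⟨z, hz, mul_inv_cancel_right z z⟩
  obtain ⟨c, hc, hcy⟩ := exists_not_commute_of_mem_conjugatesOf hgen hX hy
  have hcy' : y ≠ c * y * c⁻¹ := fun h ↦ hcy (eq_mul_inv_iff_mul_eq.1 h).symm
  obtain ⟨g, hgy, hgz⟩ := htwo hy (conj_mem_conjugatesOf c hy) hy hz hcy' hzy.symm
  refine ⟨g * c * g⁻¹, conj_mem_conjugatesOf g hc, ?_⟩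
  calc g * c * g⁻¹ * y * (g * c * g⁻¹)⁻¹
    _ = g * c * g⁻¹ * (g * y * g⁻¹) * (g * c * g⁻¹)⁻¹ := by rw [hgy]
    _ = g * (c * y * c⁻¹) * g⁻¹ := by group
    _ = z := hgz

theorem existsUnique_mul_mem_and_conj_eq (hlatin : IsLatinUnderConj (conjugatesOf x)) {z b : G}
    (hy : y ∈ conjugatesOf x) (hz : z ∈ conjugatesOf x) :
    ∃! g, g * b ∈ conjugatesOf x ∧ g * y * g⁻¹ = z := by
  have hy' : b⁻¹ * y * b ∈ conjugatesOf x := by simpa using conj_mem_conjugatesOf b⁻¹ hy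
  obtain ⟨a, ha, haz⟩ := (hlatin _ hy').surjOn hz
  have hconj (g : G) : g * b * (b⁻¹ * y * b) * (g * b)⁻¹ = g * y * g⁻¹ := by group
  refine ⟨a * b⁻¹, ⟨by simpa using ha, ?_⟩, fun g hg ↦ ?_⟩
  · rw [← hconj, inv_mul_cancel_right]
    exact haz
  · rw [eq_mul_inv_iff_mul_eq]
    exact (hlatin _ hy').injOn hg.1 ha ((hconj g).trans (hg.2.trans haz.symm))

theorem conj_ne_of_ne (hlatin : IsLatinUnderConj (conjugatesOf x)) {a b : G}
    (hy : y ∈ conjugatesOf x) (ha : a ∈ conjugatesOf x) (hb : b ∈ conjugatesOf x)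
    (hab : a ≠ b) : a * b⁻¹ * y * (a * b⁻¹)⁻¹ ≠ y := by
  intro h
  have huniq := (existsUnique_mul_mem_and_conj_eq hlatin (b := b) hy hy).unique
    ⟨by simpa using ha, h⟩ (y₂ := 1) ⟨by simpa using hb, by simp⟩
  exact hab (mul_inv_eq_one.1 huniq)

theorem exists_mul_mem_of_ne (hlatin : IsLatinUnderConj (conjugatesOf x))
    {a b : G} (ha : a ∈ conjugatesOf x) (hb : b ∈ conjugatesOf x) (hab : a ≠ b) :
    ∃ c ∈ conjugatesOf x, c ≠ b ∧ a * b⁻¹ * c ∈ conjugatesOf x := by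
  refine ⟨a * b⁻¹ * b * (a * b⁻¹)⁻¹, conj_mem_conjugatesOf _ hb,
    conj_ne_of_ne hlatin hb ha hb hab, ?_⟩
  convert conj_mem_conjugatesOf (a * b⁻¹) ha using 1
  group

theorem ncard_setOf_mul_mem_conj (g h : G) :
    {c : conjugatesOf x | h * g * h⁻¹ * c ∈ conjugatesOf x}.ncard =
      {c : conjugatesOf x | g * c ∈ conjugatesOf x}.ncard := by
  have hmem (c : G) : c ∈ conjugatesOf x ↔ h * c * h⁻¹ ∈ conjugatesOf x :=
    ⟨conj_mem_conjugatesOf h, fun hc ↦ by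
      simpa [mul_assoc] using conj_mem_conjugatesOf h⁻¹ hc⟩
  let e : conjugatesOf x ≃ conjugatesOf x := (MulAut.conj h).toEquiv.subtypeEquiv hmem
  have hpreimage : {c : conjugatesOf x | g * c ∈ conjugatesOf x} =
      e ⁻¹' {c | h * g * h⁻¹ * c ∈ conjugatesOf x} := by
    ext c
    have hconj : h * g * h⁻¹ * (h * c * h⁻¹) = h * (g * c) * h⁻¹ := by group
    exact (hmem _).trans (by rw [← hconj]; rfl)
  rw [hpreimage, Set.ncard_def, Set.ncard_def, Set.encard_preimage_of_bijective e.bijective]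

/- Let `F d` be the only `g` with `g * d ∈ X` that conjugates `b` to the same element as
`a * b⁻¹` does. Two-transitivity makes every `F d` conjugate to `a * b⁻¹`, so the fibres of `F` have
equal size, and as `#X` is prime `F` is injective or constant. It is not injective. -/
theorem IsConjTwoTransitive.mul_inv_mul_mem (htwo : IsConjTwoTransitive (conjugatesOf x))
    (hgen : closure (conjugatesOf x) = ⊤) (hX : (Nat.card (conjugatesOf x)).Prime) {a b c : G}
    (ha : a ∈ conjugatesOf x) (hb : b ∈ conjugatesOf x) (hc : c ∈ conjugatesOf x) :
    a * b⁻¹ * c ∈ conjugatesOf x := by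
  obtain rfl | hab := eq_or_ne a b
  · simpa using hc
  have hlatin : IsLatinUnderConj (conjugatesOf x) :=
    htwo.isLatinUnderConj hgen ⟨a, ha, b, hb, hab⟩ (Set.finite_of_ncard_pos hX.pos)
  choose F hF hF_unique using fun d : conjugatesOf x ↦ existsUnique_mul_mem_and_conj_eq hlatin
    (b := d) hb (conj_mem_conjugatesOf (a * b⁻¹) hb)
  have hFb : F ⟨b, hb⟩ = a * b⁻¹ := (hF_unique ⟨b, hb⟩ _ ⟨by simpa using ha, rfl⟩).symm
  have hfiber (d e : conjugatesOf x) : F e = F d ↔ F d * e ∈ conjugatesOf x :=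
    ⟨fun h ↦ h ▸ (hF e).1, fun h ↦ (hF_unique e _ ⟨h, (hF d).2⟩).symm⟩
  have hFconj (d : conjugatesOf x) : ∃ h, h * (a * b⁻¹) * h⁻¹ = F d := by
    have hd : F d * d ≠ d := fun h ↦ conj_ne_of_ne hlatin hb ha hb hab
      (by simpa [mul_eq_right.1 h] using (hF d).2.symm)
    obtain ⟨h, hha, hhb⟩ := htwo ha hb (hF d).1 d.2 hab hd
    refine ⟨h, ?_⟩
    calc h * (a * b⁻¹) * h⁻¹ = h * a * h⁻¹ * (h * b * h⁻¹)⁻¹ := by group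
      _ = F d := by rw [hha, hhb, mul_inv_cancel_right]
  have hcard (d : conjugatesOf x) :
      (F ⁻¹' {F d}).ncard = {e : conjugatesOf x | a * b⁻¹ * e ∈ conjugatesOf x}.ncard := by
    obtain ⟨h, hh⟩ := hFconj d
    rw [← ncard_setOf_mul_mem_conj _ h, hh]
    exact congrArg Set.ncard (Set.ext (hfiber d))
  obtain hinj | hconst := injective_or_forall_eq_of_ncard_fiber_eq hX F
    fun d e ↦ (hcard d).trans (hcard e).symm
  · obtain ⟨c, hc, hcb, hac⟩ := exists_mul_mem_of_ne hlatin ha hb hab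
    rw [← hFb] at hac
    exact absurd (congrArg Subtype.val (hinj ((hfiber ⟨b, hb⟩ ⟨c, hc⟩).2 hac))) hcb
  · simpa [hconst ⟨c, hc⟩ ⟨b, hb⟩, hFb] using (hF ⟨c, hc⟩).1

end TwoTransitive

theorem mul_inv_mul_mem_of_commute_conj {τ : G} (hτ : ∀ g, Commute τ (g * τ * g⁻¹))
    (hX : ∀ a ∈ conjugatesOf x, ∀ b ∈ conjugatesOf x, ∃ n : ℤ, τ ^ n * a * (τ ^ n)⁻¹ = b)
    {a b c : G} (ha : a ∈ conjugatesOf x) (hb : b ∈ conjugatesOf x) (hc : c ∈ conjugatesOf x) :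
    a * b⁻¹ * c ∈ conjugatesOf x := by
  obtain ⟨k, rfl⟩ := hX b hb a ha
  obtain ⟨l, rfl⟩ := hX b hb c hc
  have hcomm : Commute (τ ^ l) (b * τ ^ (-k) * b⁻¹) := by
    rw [← conj_zpow]
    exact (hτ b).zpow_zpow l (-k)
  convert conj_mem_conjugatesOf (τ ^ l) ha using 1
  calc τ ^ k * b * (τ ^ k)⁻¹ * b⁻¹ * (τ ^ l * b * (τ ^ l)⁻¹)
    _ = τ ^ k * (b * τ ^ (-k) * b⁻¹ * τ ^ l) * b * (τ ^ l)⁻¹ := by group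
    _ = τ ^ k * (τ ^ l * (b * τ ^ (-k) * b⁻¹)) * b * (τ ^ l)⁻¹ := by rw [hcomm.eq]
    _ = τ ^ l * (τ ^ k * b * (τ ^ k)⁻¹) * (τ ^ l)⁻¹ := by group

theorem isConjTwoTransitive_of_isMultiplyPretransitive
    (h : IsMultiplyPretransitive (ConjAct G) (orbit (ConjAct G) x) 2) :
    IsConjTwoTransitive (conjugatesOf x) := by
  have horbit : orbit (ConjAct G) x = conjugatesOf x := ConjAct.orbit_eq_carrier_conjClasses x
  rw [is_two_pretransitive_iff] at h
  rw [← horbit]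
  intro a ha b hb c hc d hd hab hcd
  obtain ⟨g, hgac, hgbd⟩ := @h ⟨a, ha⟩ ⟨b, hb⟩ ⟨c, hc⟩ ⟨d, hd⟩ (by simpa using hab)
    (by simpa using hcd)
  exact ⟨ConjAct.ofConjAct g, congrArg Subtype.val hgac, congrArg Subtype.val hgbd⟩

theorem commute_conj_of_forall_conj_eq_zpow_conj {X : Set G} (hX : closure X = ⊤) {τ g : G} {n : ℤ}
    (h : ∀ y ∈ X, g * τ * g⁻¹ * y * (g * τ * g⁻¹)⁻¹ = τ ^ n * y * (τ ^ n)⁻¹) :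
    Commute τ (g * τ * g⁻¹) := by
  have hcenter : (τ ^ n)⁻¹ * (g * τ * g⁻¹) ∈ center G :=
    mem_center_of_closure_eq_top hX fun y hy ↦ by
      calc y * ((τ ^ n)⁻¹ * (g * τ * g⁻¹))
        _ = (τ ^ n)⁻¹ * (τ ^ n * y * (τ ^ n)⁻¹) * (g * τ * g⁻¹) := by group
        _ = (τ ^ n)⁻¹ * (g * τ * g⁻¹) * y := by rw [← h y hy]; group
  rw [← mul_inv_cancel_left (τ ^ n) (g * τ * g⁻¹)]
  exact ((Commute.refl τ).zpow_right n).mul_right (mem_center_iff.1 hcenter τ)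

theorem mul_inv_mul_mem_conjugatesOf (hgen : closure (conjugatesOf x) = ⊤)
    (hX : (Nat.card (conjugatesOf x)).Prime) {a b c : G}
    (ha : a ∈ conjugatesOf x) (hb : b ∈ conjugatesOf x) (hc : c ∈ conjugatesOf x) :
    a * b⁻¹ * c ∈ conjugatesOf x := by
  have horbit : orbit (ConjAct G) x = conjugatesOf x := ConjAct.orbit_eq_carrier_conjClasses x
  obtain htwo | ⟨τ, hτ, hconj⟩ := isMultiplyPretransitive_two_or_exists_conj_smul_eq_zpow_smul
    (G := ConjAct G) (α := orbit (ConjAct G) x) (horbit ▸ hX)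
  · exact (isConjTwoTransitive_of_isMultiplyPretransitive htwo).mul_inv_mul_mem hgen hX ha hb hc
  refine mul_inv_mul_mem_of_commute_conj (τ := ConjAct.ofConjAct τ) (fun g ↦ ?_)
    (fun y hy z hz ↦ ?_) ha hb hc
  · obtain ⟨n, hn⟩ := hconj (ConjAct.toConjAct g)
    exact commute_conj_of_forall_conj_eq_zpow_conj hgen fun y hy ↦
      congrArg Subtype.val (hn ⟨y, horbit.symm ▸ hy⟩)
  · obtain ⟨⟨_, n, rfl⟩, hn⟩ :=
      exists_smul_eq (zpowers τ) (⟨y, horbit.symm ▸ hy⟩ : orbit (ConjAct G) x) ⟨z, horbit.symm ▸ hz⟩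
    exact ⟨n, congrArg Subtype.val hn⟩

section CosetOfNormalSubgroup

open scoped Pointwise

instance normal_stabilizer_conjugatesOf : (stabilizer G (conjugatesOf x)).Normal := by
  refine ⟨fun n hn g ↦ mem_stabilizer_set.2 fun y ↦ ?_⟩
  have hconj (h z : G) : h * z * h⁻¹ ∈ conjugatesOf x ↔ z ∈ conjugatesOf x :=
    ⟨fun hz ↦ by simpa [mul_assoc] using conj_mem_conjugatesOf h⁻¹ hz, conj_mem_conjugatesOf h⟩
  calc g * n * g⁻¹ * y ∈ conjugatesOf x
    _ ↔ g * (n * (g⁻¹ * y * g)) * g⁻¹ ∈ conjugatesOf x := by group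
    _ ↔ g⁻¹ * y * g ∈ conjugatesOf x := (hconj g _).trans (mem_stabilizer_set.1 hn _)
    _ ↔ y ∈ conjugatesOf x := by simpa using hconj g⁻¹ y

theorem mem_stabilizer_conjugatesOf_iff (hgen : closure (conjugatesOf x) = ⊤)
    (hX : (Nat.card (conjugatesOf x)).Prime) (hy : y ∈ conjugatesOf x) {n : G} :
    n ∈ stabilizer G (conjugatesOf x) ↔ n * y ∈ conjugatesOf x := by
  refine ⟨fun hn ↦ (mem_stabilizer_set.1 hn y).2 hy, fun hn ↦ ?_⟩
  refine (mem_stabilizer_set' (Set.finite_of_ncard_pos hX.pos)).2 fun z hz ↦ ?_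
  simpa using mul_inv_mul_mem_conjugatesOf hgen hX hn hy hz

theorem card_stabilizer_conjugatesOf (hgen : closure (conjugatesOf x) = ⊤)
    (hX : (Nat.card (conjugatesOf x)).Prime) :
    Nat.card (stabilizer G (conjugatesOf x)) = Nat.card (conjugatesOf x) :=
  Nat.card_congr <| (Equiv.mulRight x).subtypeEquiv fun _ ↦
    mem_stabilizer_conjugatesOf_iff hgen hX (IsConj.refl x)

theorem eq_one_of_mem_stabilizer_conjugatesOf_of_commute (hgen : closure (conjugatesOf x) = ⊤)
    (hX : (Nat.card (conjugatesOf x)).Prime) (hy : y ∈ conjugatesOf x) {n : G}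
    (hn : n ∈ stabilizer G (conjugatesOf x)) (hny : Commute n y) : n = 1 := by
  by_contra hn1
  have hcard := card_stabilizer_conjugatesOf hgen hX
  have : Fact (Nat.card (conjugatesOf x)).Prime := ⟨hX⟩
  have hzpowers : zpowers (⟨n, hn⟩ : stabilizer G (conjugatesOf x)) = ⊤ :=
    zpowers_eq_top_of_prime_card hcard (by simpa using hn1)
  have hnontrivial : (conjugatesOf x).Nontrivial :=
    (Set.one_lt_ncard_iff_nontrivial_and_finite.1 hX.one_lt).1
  obtain ⟨z, hz, hzy⟩ := exists_not_commute_of_mem_conjugatesOf hgen hnontrivial hy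
  have hzN : z * y⁻¹ ∈ stabilizer G (conjugatesOf x) :=
    (mem_stabilizer_conjugatesOf_iff hgen hX hy).2 (by simpa using hz)
  obtain ⟨i, hi⟩ : ⟨z * y⁻¹, hzN⟩ ∈ zpowers (⟨n, hn⟩ : stabilizer G (conjugatesOf x)) :=
    hzpowers ▸ mem_top _
  have hni : n ^ i = z * y⁻¹ := congrArg Subtype.val hi
  refine hzy ?_
  rw [← inv_mul_cancel_right z y, ← hni]
  exact (hny.zpow_left i).mul_left (Commute.refl y)

theorem exists_normal_card_eq_and_bijOn_conj (hgen : closure (conjugatesOf x) = ⊤)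
    (hX : (Nat.card (conjugatesOf x)).Prime) :
    ∃ N : Subgroup G, N.Normal ∧ Nat.card N = Nat.card (conjugatesOf x) ∧
      Set.BijOn (fun n ↦ n * x * n⁻¹) N (conjugatesOf x) := by
  have hcard := card_stabilizer_conjugatesOf hgen hX
  have hmaps : Set.MapsTo (fun n ↦ n * x * n⁻¹) (stabilizer G (conjugatesOf x)) (conjugatesOf x) :=
    fun n _ ↦ conj_mem_conjugatesOf n (IsConj.refl x)
  have hinj : Set.InjOn (fun n ↦ n * x * n⁻¹) (stabilizer G (conjugatesOf x)) := by
    intro m hm n hn hmn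
    refine inv_mul_eq_one.1 (eq_one_of_mem_stabilizer_conjugatesOf_of_commute hgen hX
      (IsConj.refl x) (mul_mem (inv_mem hm) hn) ?_)
    calc m⁻¹ * n * x = m⁻¹ * (n * x * n⁻¹) * n := by group
      _ = m⁻¹ * (m * x * m⁻¹) * n := congrArg (m⁻¹ * · * n) hmn.symm
      _ = x * (m⁻¹ * n) := by group
  refine ⟨_, normal_stabilizer_conjugatesOf, hcard, hmaps, hinj, Eq.superset ?_⟩
  exact Set.eq_of_subset_of_ncard_le hmaps.image_subset
    (hcard.ge.trans hinj.ncard_image.ge) (Set.finite_of_ncard_pos hX.pos)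

end CosetOfNormalSubgroup

end ConjugacyClass

/-! ### The affine parametrization -/

section AffineQuandle

variable {G : Type*} [Group G] {N : Subgroup G} [N.Normal] [IsCyclic N] {p : ℕ}

theorem exists_mulEquiv_zmod_conj_eq (hN : Nat.card N = p) (x : G) :
    ∃ (e : Multiplicative (ZMod p) ≃* N) (α : ZMod p),
      ∀ i, x * e (.ofAdd i) * x⁻¹ = e (.ofAdd (α * i)) := by
  subst hN
  let e := zmodCyclicMulEquiv ‹IsCyclic N›
  let f : ZMod (Nat.card N) →+ ZMod (Nat.card N) :=
    MonoidHom.toAdditive ((e.trans (MulAut.conjNormal x)).trans e.symm).toMonoidHom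
  refine ⟨e, f 1, fun i ↦ ?_⟩
  have hf : f i = f 1 * i := by
    simpa [mul_comm] using ZMod.map_smul f i 1
  rw [← hf, ← MulAut.conjNormal_apply]
  exact congrArg Subtype.val (e.apply_symm_apply _).symm

theorem exists_affine_parametrization_of_bijOn_conj [Nontrivial (ZMod p)] (hN : Nat.card N = p)
    {x : G} {X : Set G} (hX : Set.BijOn (fun n ↦ n * x * n⁻¹) N X) :
    ∃ α : ZMod p, α ≠ 0 ∧ α ≠ 1 ∧ ∃ φ : ZMod p → G, Function.Injective φ ∧ Set.range φ = X ∧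
      ∀ i j, φ i * φ j * (φ i)⁻¹ = φ ((1 - α) * i + α * j) := by
  obtain ⟨e, α, hα⟩ := exists_mulEquiv_zmod_conj_eq hN x
  let D (i : ZMod p) : G := e (.ofAdd i)
  have hD_mem (i : ZMod p) : D i ∈ N := (e (.ofAdd i)).2
  have hD_injective : Function.Injective D :=
    Subtype.val_injective.comp (e.injective.comp Multiplicative.ofAdd.injective)
  have hD_range : Set.range D = N := by
    rw [← Subtype.range_coe (s := (N : Set G))]
    exact (e.surjective.comp Multiplicative.ofAdd.surjective).range_comp _
  have hD_zero : D 0 = 1 := by simp [D]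
  have hD_add (i j : ZMod p) : D (i + j) = D i * D j := by simp [D]
  have hD_neg (i : ZMod p) : D (-i) = (D i)⁻¹ := by simp [D]
  have hDα (i : ZMod p) : D (α * i) = x * D i * x⁻¹ := (hα i).symm
  refine ⟨α, ?_, ?_, fun i ↦ D i * x * (D i)⁻¹, ?_, ?_, fun i j ↦ ?_⟩
  · rintro rfl
    have h1 : D 1 = D 0 := by simpa [hD_zero, eq_comm (a := (1 : G))] using hDα 1
    exact one_ne_zero (hD_injective h1)
  · rintro rfl
    have h1 : D 1 = D 0 := hX.injOn (hD_mem 1) (hD_mem 0) <| by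
      simpa [hD_zero, mul_inv_eq_iff_eq_mul, eq_mul_inv_iff_mul_eq] using hDα 1
    exact one_ne_zero (hD_injective h1)
  · exact fun i j hij ↦ hD_injective (hX.injOn (hD_mem i) (hD_mem j) hij)
  · rw [← hX.image_eq, ← hD_range, ← Set.range_comp]
    rfl
  · have hij : D ((1 - α) * i + α * j) = D i * (x * ((D i)⁻¹ * D j) * x⁻¹) := by
      rw [← hD_neg, ← hD_add, ← hDα, ← hD_add]
      exact congrArg D (by ring)
    simp only [hij]
    group

end AffineQuandle

/-! ### Yetter–Drinfeld modules -/

section YetterDrinfeld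

theorem finrank_eq_card_mul_of_isInternal {ι k V : Type*} [DecidableEq ι] [Field k]
    [AddCommGroup V] [Module k V] [FiniteDimensional k V] {W : ι → Submodule k V}
    (hW : DirectSum.IsInternal W) {d : ℕ} (hd : ∀ i, W i ≠ ⊥ → Module.finrank k (W i) = d) :
    Module.finrank k V = Nat.card {i | W i ≠ ⊥} * d := by
  have : Fintype {i // W i ≠ ⊥} :=
    (WellFoundedGT.finite_ne_bot_of_iSupIndep hW.submodule_iSupIndep).fintype
  have hsum := (LinearEquiv.ofBijective
    (DirectSum.coeLinearMap fun i : {i // W i ≠ ⊥} ↦ W i)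
    (DirectSum.isInternal_ne_bot_iff.2 hW)).finrank_eq
  rw [← hsum, Module.finrank_directSum, Finset.sum_congr rfl fun i _ ↦ hd i.1 i.2,
    Finset.sum_const, smul_eq_mul, Finset.card_univ, ← Nat.card_eq_fintype_card]
  rfl

open Subgroup

variable {k G V : Type*} [Field k] [Group G] [AddCommGroup V] [Module k V]
  {ρ : Representation k G V}

theorem map_eq_of_forall_mem_conj {W : G → Submodule k V}
    (hW : ∀ g x, ∀ v ∈ W x, ρ g v ∈ W (g * x * g⁻¹)) (g x : G) :
    (W x).map (ρ g) = W (g * x * g⁻¹) := by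
  refine le_antisymm (Submodule.map_le_iff_le_comap.2 (hW g x)) fun v hv ↦ ?_
  refine ⟨ρ g⁻¹ v, ?_, ρ.self_inv_apply g v⟩
  simpa [mul_assoc] using hW g⁻¹ _ v hv

theorem finrank_conj_eq {W : G → Submodule k V}
    (hW : ∀ g x, ∀ v ∈ W x, ρ g v ∈ W (g * x * g⁻¹)) (g x : G) :
    Module.finrank k (W (g * x * g⁻¹)) = Module.finrank k (W x) := by
  rw [← map_eq_of_forall_mem_conj hW]
  exact (Submodule.equivMapOfInjective _ (ρ.apply_bijective g).injective _).finrank_eq.symm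

theorem apply_mem_of_mem_centralizer {W : G → Submodule k V}
    (hW : ∀ g x, ∀ v ∈ W x, ρ g v ∈ W (g * x * g⁻¹)) {g x : G} (hg : g ∈ centralizer {x}) {v : V}
    (hv : v ∈ W x) : ρ g v ∈ W x := by
  simpa [mem_centralizer_singleton_iff.1 hg] using hW g x v hv

theorem exists_ne_zero_smul_of_forall_commute {x g : G} {W : Submodule k V} (hW : W ≠ ⊥)
    (hstable : ∀ v ∈ W, ρ g v ∈ W)
    (hscalar : ∀ f : V →ₗ[k] V, (∀ v ∈ W, f v ∈ W) →
      (∀ h ∈ centralizer {x}, ∀ v ∈ W, f (ρ h v) = ρ h (f v)) → ∃ c : k, ∀ v ∈ W, f v = c • v)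
    (hg : ∀ h ∈ centralizer {x}, Commute g h) : ∃ c : k, c ≠ 0 ∧ ∀ v ∈ W, ρ g v = c • v := by
  obtain ⟨c, hc⟩ := hscalar (ρ g) hstable fun h hh v _ ↦ by
    rw [← Module.End.mul_apply, ← map_mul, (hg h hh).eq, map_mul, Module.End.mul_apply]
  refine ⟨c, ?_, hc⟩
  rintro rfl
  obtain ⟨v, hv, hv0⟩ := W.ne_bot_iff.1 hW
  exact hv0 ((map_eq_zero_iff _ (ρ.apply_bijective g).injective).1 (by simpa using hc v hv))

theorem finrank_eq_one_of_forall_exists_smul {S : Set G} {W : Submodule k V} (hW : W ≠ ⊥)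
    (hscalar : ∀ g ∈ S, ∃ c : k, ∀ v ∈ W, ρ g v = c • v)
    (hirr : ∀ U ≤ W, (∀ g ∈ S, ∀ v ∈ U, ρ g v ∈ U) → U = ⊥ ∨ U = W) :
    Module.finrank k W = 1 := by
  obtain ⟨w, hw, hw0⟩ := W.ne_bot_iff.1 hW
  have hle : k ∙ w ≤ W := (Submodule.span_singleton_le_iff_mem w W).2 hw
  obtain hbot | htop := hirr (k ∙ w) hle fun g hg v hv ↦ by
    obtain ⟨c, hc⟩ := hscalar g hg
    exact hc v (hle hv) ▸ Submodule.smul_mem _ c hv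
  · exact absurd (Submodule.span_singleton_eq_bot.1 hbot) hw0
  · rw [← htop, finrank_span_singleton hw0]

theorem finrank_eq_one_of_card_conjugatesOf_eq_one {x : G}
    (hgen : closure (conjugatesOf x) = ⊤) (hcard : Nat.card (conjugatesOf x) = 1)
    {W : Submodule k V} (hW : W ≠ ⊥)
    (hstable : ∀ g ∈ centralizer {x}, ∀ v ∈ W, ρ g v ∈ W)
    (hirr : ∀ U ≤ W, (∀ g ∈ centralizer {x}, ∀ v ∈ U, ρ g v ∈ U) → U = ⊥ ∨ U = W)
    (hscalar : ∀ f : V →ₗ[k] V, (∀ v ∈ W, f v ∈ W) →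
      (∀ g ∈ centralizer {x}, ∀ v ∈ W, f (ρ g v) = ρ g (f v)) → ∃ c : k, ∀ v ∈ W, f v = c • v) :
    Module.finrank k W = 1 := by
  have hcomm := commute_of_card_conjugatesOf_eq_one hgen hcard
  refine finrank_eq_one_of_forall_exists_smul hW (fun g hg ↦ ?_) hirr
  exact (exists_ne_zero_smul_of_forall_commute hW (hstable g hg) hscalar fun h _ ↦ hcomm g h).imp
    fun _ ↦ And.right

theorem card_conjugatesOf_eq_and_finrank_eq_one [DecidableEq G] {W : G → Submodule k V}
    (hgrad : DirectSum.IsInternal W) (hW : ∀ g x, ∀ v ∈ W x, ρ g v ∈ W (g * x * g⁻¹))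
    (hV : (Module.finrank k V).Prime) {x : G} (hX : {y | W y ≠ ⊥} = conjugatesOf x)
    (hgen : closure (conjugatesOf x) = ⊤)
    (hirr : ∀ U ≤ W x, (∀ g ∈ centralizer {x}, ∀ v ∈ U, ρ g v ∈ U) → U = ⊥ ∨ U = W x)
    (hscalar : ∀ f : V →ₗ[k] V, (∀ v ∈ W x, f v ∈ W x) →
      (∀ g ∈ centralizer {x}, ∀ v ∈ W x, f (ρ g v) = ρ g (f v)) →
        ∃ c : k, ∀ v ∈ W x, f v = c • v) :
    Nat.card (conjugatesOf x) = Module.finrank k V ∧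
      ∀ y, W y ≠ ⊥ → Module.finrank k (W y) = 1 := by
  have : FiniteDimensional k V := .of_finrank_pos hV.pos
  have hconj (y : G) (hy : W y ≠ ⊥) : Module.finrank k (W y) = Module.finrank k (W x) := by
    obtain ⟨g, rfl⟩ := isConj_iff.1 (hX.subset hy)
    exact finrank_conj_eq hW g x
  have hmul : Module.finrank k V = Nat.card (conjugatesOf x) * Module.finrank k (W x) := by
    rw [finrank_eq_card_mul_of_isInternal hgrad hconj, hX]
  have hone : Module.finrank k (W x) = 1 := by
    refine ((Nat.dvd_prime hV).1 (Dvd.intro_left _ hmul.symm)).resolve_right fun h ↦ ?_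
    have hcard : Nat.card (conjugatesOf x) = 1 := by simpa [h, hV.ne_zero] using hmul
    exact hV.ne_one (h.symm.trans (finrank_eq_one_of_card_conjugatesOf_eq_one hgen hcard
      (hX.superset (IsConj.refl x)) (fun g hg v ↦ apply_mem_of_mem_centralizer hW hg) hirr hscalar))
  exact ⟨by rw [hmul, hone, mul_one], fun y hy ↦ (hconj y hy).trans hone⟩

theorem exists_vectors_of_bijOn_conj {W : G → Submodule k V}
    (hW : ∀ g x, ∀ v ∈ W x, ρ g v ∈ W (g * x * g⁻¹)) {x : G} (hx : W x ≠ ⊥) {c : k}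
    (hc : ∀ v ∈ W x, ρ x v = c • v) {N : Subgroup G} [N.Normal] {X : Set G}
    (hX : Set.BijOn (fun n ↦ n * x * n⁻¹) N X) :
    ∃ v : G → V, (∀ y ∈ X, v y ∈ W y ∧ v y ≠ 0) ∧
      ∀ y ∈ X, ∀ z ∈ X, ρ y (v z) = c • v (y * z * y⁻¹) := by
  obtain ⟨u, hu, hu0⟩ := (W x).ne_bot_iff.1 hx
  let v (y : G) : V := ρ (Function.invFunOn (fun n ↦ n * x * n⁻¹) N y) u
  have hv {n : G} (hn : n ∈ N) : v (n * x * n⁻¹) = ρ n u := by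
    simp only [v, hX.injOn.leftInvOn_invFunOn hn]
  refine ⟨v, ?_, ?_⟩
  · intro y hy
    obtain ⟨n, hn, rfl⟩ := hX.surjOn hy
    simp only [hv hn]
    exact ⟨hW n x u hu, (map_ne_zero_iff _ (ρ.apply_bijective n).injective).2 hu0⟩
  · intro y hy z hz
    obtain ⟨m, hm, rfl⟩ := hX.surjOn hy
    obtain ⟨n, hn, rfl⟩ := hX.surjOn hz
    have hr : m * (x * (m⁻¹ * n) * x⁻¹) ∈ N :=
      mul_mem hm (‹N.Normal›.conj_mem _ (mul_mem (inv_mem hm) hn) x)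
    have hmul : m * x * m⁻¹ * n = m * (x * (m⁻¹ * n) * x⁻¹) * x := by group
    have hconj : m * x * m⁻¹ * (n * x * n⁻¹) * (m * x * m⁻¹)⁻¹ =
        m * (x * (m⁻¹ * n) * x⁻¹) * x * (m * (x * (m⁻¹ * n) * x⁻¹))⁻¹ := by group
    calc ρ (m * x * m⁻¹) (v (n * x * n⁻¹))
      _ = ρ (m * x * m⁻¹ * n) u := by rw [hv hn, map_mul _ _ n, Module.End.mul_apply]
      _ = ρ (m * (x * (m⁻¹ * n) * x⁻¹)) (ρ x u) := by rw [hmul, map_mul, Module.End.mul_apply]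
      _ = c • v (m * x * m⁻¹ * (n * x * n⁻¹) * (m * x * m⁻¹)⁻¹) := by
        rw [hc u hu, map_smul, hconj, hv hr]

end YetterDrinfeld

/-- Let `k` be a field, `G` a group, `p` a prime, and `V` a Yetter–Drinfeld module
over `kG` (a `G`-representation with a `G`-grading `V = ⊕_{x∈G} V_x` satisfying
`g · V_x = V_{gxg⁻¹}`) with `dim_k V = p`. Let `X = {x | V_x ≠ 0}` be the support, assumed to be
a conjugacy class generating `G`, and assume `V` is absolutely irreducible: each `V_x` (`x ∈ X`)
is a nonzero irreducible `C_G(x)`-module all of whose `C_G(x)`-equivariant endomorphisms are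
scalars. Then: (i) `X ≅ Aff(p, α)` for some `α ∈ ℤ/pℤ \ {0,1}`; (ii) `dim_k V_x = 1` for all
`x ∈ X`; (iii) there are `λ ∈ k^×` and nonzero vectors `v_x ∈ V_x` with
`x · v_y = λ v_{x y x⁻¹}` for all `x, y ∈ X`. -/
theorem stmt9 {k : Type*} [Field k] {G : Type*} [Group G] [DecidableEq G]
    {V : Type*} [AddCommGroup V] [Module k V]
    (ρ : Representation k G V)
    (Vx : G → Submodule k V)
    (hgrad : DirectSum.IsInternal Vx)
    (hcompat : ∀ g x : G, ∀ v ∈ Vx x, ρ g v ∈ Vx (g * x * g⁻¹))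
    (p : ℕ) (hp : p.Prime)
    (hdim : Module.finrank k V = p)
    (hXconj : ∃ x₀ : G, {x : G | Vx x ≠ ⊥} = {y | IsConj x₀ y})
    (hXgen : Subgroup.closure {x : G | Vx x ≠ ⊥} = ⊤)
    (hirr : ∀ x : G, Vx x ≠ ⊥ →
      ∀ U : Submodule k V, U ≤ Vx x →
        (∀ g ∈ Subgroup.centralizer ({x} : Set G), ∀ v ∈ U, ρ g v ∈ U) →
        U = ⊥ ∨ U = Vx x)
    (habs : ∀ x : G, Vx x ≠ ⊥ →
      ∀ f : V →ₗ[k] V, (∀ v ∈ Vx x, f v ∈ Vx x) →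
        (∀ g ∈ Subgroup.centralizer ({x} : Set G), ∀ v ∈ Vx x, f (ρ g v) = ρ g (f v)) →
        ∃ c : k, ∀ v ∈ Vx x, f v = c • v) :
    (∃ α : ZMod p, α ≠ 0 ∧ α ≠ 1 ∧
      ∃ φ : ZMod p → G, Function.Injective φ ∧ Set.range φ = {x : G | Vx x ≠ ⊥} ∧
        ∀ i j : ZMod p, φ i * φ j * (φ i)⁻¹ = φ ((1 - α) * i + α * j)) ∧
    (∀ x : G, Vx x ≠ ⊥ → Module.finrank k (Vx x) = 1) ∧
    (∃ lam : k, lam ≠ 0 ∧ ∃ v : G → V,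
      (∀ x : G, Vx x ≠ ⊥ → v x ∈ Vx x ∧ v x ≠ 0) ∧
      (∀ x y : G, Vx x ≠ ⊥ → Vx y ≠ ⊥ → ρ x (v y) = lam • v (x * y * x⁻¹))) := by
  obtain ⟨x, hX : {y | Vx y ≠ ⊥} = conjugatesOf x⟩ := hXconj
  have hx : Vx x ≠ ⊥ := hX.superset (IsConj.refl x)
  have hxgen : Subgroup.closure (conjugatesOf x) = ⊤ := hX ▸ hXgen
  obtain ⟨hcard, hone⟩ := card_conjugatesOf_eq_and_finrank_eq_one hgrad hcompat (hdim ▸ hp) hX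
    hxgen (hirr x hx) (habs x hx)
  rw [hdim] at hcard
  obtain ⟨N, hN, hNcard, hNX⟩ := exists_normal_card_eq_and_bijOn_conj hxgen (hcard ▸ hp)
  rw [hcard] at hNcard
  have : Fact p.Prime := ⟨hp⟩
  have : IsCyclic N := isCyclic_of_prime_card hNcard
  rw [← hX] at hNX
  obtain ⟨c, hc0, hc⟩ := exists_ne_zero_smul_of_forall_commute (ρ := ρ) (g := x) hx
    (fun v ↦ apply_mem_of_mem_centralizer hcompat (Subgroup.mem_centralizer_singleton_iff.2 rfl))
    (habs x hx) fun h hh ↦ (Subgroup.mem_centralizer_singleton_iff.1 hh).symm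
  obtain ⟨v, hv, hρv⟩ := exists_vectors_of_bijOn_conj hcompat hx hc hNX
  exact ⟨exists_affine_parametrization_of_bijOn_conj hNcard hNX, hone, c, hc0, v, hv,
    fun y z hy hz ↦ hρv y hy z hz⟩
end
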